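/- arXiv:2303.14503 — 5 statements merged into one kernel-verified Lean document; each statement's English description precedes it below -/
import Mathlib

section
/- For any embedding (continuous injective map) g : K5−(4,5) → ℝ² one has l(g) := w(g|_{K3}, g(4)) − w(g|_{K3}, g(5)) = ±1. -/
/-!
For vertices `i, j, k` let `ω(ij; k)` be the variation of the argument of `g x - g k` as `x` runs
along the edge `ij` (`angVar`). Vertices are numbered `1, ..., 5` here and `0, ..., 4` in the code.

* *Squares* (`angVar_square`). For disjoint edges `ij`, `kl` the map `(x, y) ↦ g x - g y` is
  nonvanishing on the square `ij × kl`, hence has a continuous logarithm there, and the variation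
  of the argument around the boundary of the square is zero.
* *Tripods* (`tripod`, `angVar_tripod`). For edges `vi`, `vj`, `vk` the sum
  `Y_v(i, j, k) = ω(vi; j) - ω(vj; i) + ω(vj; k) - ω(vk; j) + ω(vk; i) - ω(vi; k)`
  equals `π` or `-π`. It is the variation of the argument of `g x - g y` while the points `x`, `y`
  run through half of the cycle in which two points of the tripod exchange places twice.
  It is an odd multiple of `π`, since its exponential is `-1`. It does not change
  when the arms are shortened, so each arm may be cut where it first leaves a small disc centred
  at `g v`. Every one of the six terms is then the variation of the direction from a point of the
  circle to points of the closed disc, starting with the direction to the centre, so it is less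
  than `π / 2` in absolute value; the sum is less than `3π`.

The rest is linear algebra. The six squares spanned by an edge of the triangle and an edge from
its opposite vertex to `4` or `5` give `2π l(g) = Y_4(1, 2, 3) - Y_5(1, 2, 3)`, and it remains to
exclude that both terms are equal. The squares also give `Y_1(2, 3, 4) = -Y_4(1, 2, 3)` and
`Y_1(2, 3, 5) = -Y_5(1, 2, 3)`, and likewise at `2` and `3` by cyclic symmetry, while
`Y_1(2, 3, 4) - Y_1(2, 3, 5) + Y_1(2, 4, 5) - Y_1(3, 4, 5) = 0` holds identically. So equality
would force `Y_i(j, 4, 5) = Y_i(k, 4, 5)` whenever `{i, j, k} = {1, 2, 3}`. The squares `i4 × j5`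
and `i5 × j4` give `Y_i(j, 4, 5) = -Y_j(i, 4, 5)`. Going once around the triangle changes the sign
three times, so `Y_1(2, 4, 5)` is its own negative, although it is `π` or `-π`.
-/

open Set

noncomputable section

/-- The vertex `i` of `K₅` (vertices are 0-indexed: index `i` is vertex `i+1`),
realized as a point of `ℝ⁵`. -/
def vert (i : Fin 5) : Fin 5 → ℝ := Pi.single i 1

/-- The edge between vertices `i` and `j`, realized as a segment in `ℝ⁵`. -/
def seg (i j : Fin 5) : Set (Fin 5 → ℝ) := segment ℝ (vert i) (vert j)

/-- `(i, j)` is an edge of `K₅ − (4,5)`: the edge between vertices `4` and `5`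
(indices `3` and `4`) is deleted. -/
def IsEdge (i j : Fin 5) : Prop := i ≠ j ∧ ({i, j} : Set (Fin 5)) ≠ {3, 4}

/-- The graph `K₅ − (4,5)`, realized as a 1-dimensional simplicial complex in `ℝ⁵`. -/
def K5m45 : Set (Fin 5 → ℝ) := ⋃ (i) (j) (_ : IsEdge i j), seg i j

/-- `g` is a continuous almost embedding of `K₅ − (4,5)` in the plane `ℝ² = ℂ`:
it is continuous on the complex, and the images of any two disjoint
(non-adjacent) edges are disjoint. -/
def AlmostEmb (g : (Fin 5 → ℝ) → ℂ) : Prop :=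
  ContinuousOn g K5m45 ∧
  ∀ i j k l : Fin 5, IsEdge i j → IsEdge k l →
    ({i, j} : Set (Fin 5)) ∩ ({k, l} : Set (Fin 5)) = ∅ →
    Disjoint (g '' seg i j) (g '' seg k l)

/-- The closed curve traversing the cycle `K₃` on vertices `1, 2, 3`, oriented by
the cyclic permutation `(1 2 3)`. -/
def triLoop (t : ℝ) : Fin 5 → ℝ :=
  if t ≤ 1/3 then (1 - 3*t) • vert 0 + (3*t) • vert 1
  else if t ≤ 2/3 then (2 - 3*t) • vert 1 + (3*t - 1) • vert 2
  else (3 - 3*t) • vert 2 + (3*t - 2) • vert 0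

/-- `n` is the winding number around `A` of the closed curve `γ` (a loop
parametrized by `[0,1]`): a continuous logarithm of `γ - A` gains `2πin`
along the loop. -/
def IsWindingNumber (γ : ℝ → ℂ) (A : ℂ) (n : ℤ) : Prop :=
  ∃ h : ℝ → ℂ, ContinuousOn h (Icc 0 1) ∧
    (∀ t ∈ Icc (0:ℝ) 1, γ t = A + Complex.exp (h t)) ∧
    h 1 - h 0 = 2 * (Real.pi : ℂ) * Complex.I * (n : ℂ)


/-! ### Logarithmic variation -/

/-- A nonvanishing continuous function on a convex set has a continuous logarithm. -/
lemma exists_log_of_convex {E : Type*} [NormedAddCommGroup E] [NormedSpace ℝ E] {S : Set E}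
    (hS : Convex ℝ S) (hne : S.Nonempty) {f : E → ℂ} (hf : ContinuousOn f S)
    (h0 : ∀ x ∈ S, f x ≠ 0) :
    ∃ h : E → ℂ, ContinuousOn h S ∧ ∀ x ∈ S, Complex.exp (h x) = f x := by
  classical
  have := hS.contractibleSpace hne
  have := hS.locallyPathConnectedSpace
  obtain ⟨x₀, hx₀⟩ := hne
  rcases Complex.isCoveringMapOn_exp.existsUnique_continuousMap_lifts
    (⟨fun x : S => f x, hf.domRestrict⟩ : C(S, ℂ)) (a₀ := ⟨x₀, hx₀⟩)
    (Complex.exp_log (h0 x₀ hx₀)) (fun x => h0 x x.2) with ⟨F, ⟨-, hF⟩, -⟩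
  refine ⟨fun x => if hx : x ∈ S then F ⟨x, hx⟩ else 0, ?_, fun x hx => ?_⟩
  · rw [continuousOn_iff_continuous_domRestrict]
    convert! map_continuous F
    ext x
    simp
  · simp only [dif_pos hx]
    exact congrFun hF ⟨x, hx⟩

/-- `h` is a continuous logarithm of `f` on `[u, v]`. -/
def IsLogOn (h f : ℝ → ℂ) (u v : ℝ) : Prop :=
  ContinuousOn h (Icc u v) ∧ ∀ t ∈ Icc u v, Complex.exp (h t) = f t

open Classical in
/-- The increment along `[u, v]` of a continuous logarithm of `f`; its imaginary part is the
variation of the argument of `f`. It is `0` if `f` has no continuous logarithm on `[u, v]`. -/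
def logVar (f : ℝ → ℂ) (u v : ℝ) : ℂ :=
  if H : ∃ h, IsLogOn h f u v then H.choose v - H.choose u else 0

/-- The increment does not depend on the logarithm: two continuous logarithms of the same
function which agree at `u` are lifts through a covering map, hence equal. -/
lemma logVar_eq {h f : ℝ → ℂ} {u v : ℝ} (huv : u ≤ v) (hh : IsLogOn h f u v) :
    logVar f u v = h v - h u := by
  have H : ∃ h, IsLogOn h f u v := ⟨h, hh⟩
  rw [logVar, dif_pos H]
  obtain ⟨kc, ke⟩ := H.choose_spec
  set k := H.choose
  have hu : u ∈ Icc u v := left_mem_Icc.2 huv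
  have hv : v ∈ Icc u v := right_mem_Icc.2 huv
  have h1 : Complex.exp (h u - k u) = 1 := by
    rw [Complex.exp_sub, hh.2 u hu, ke u hu, div_self]
    rw [← ke u hu]; exact Complex.exp_ne_zero _
  have key : EqOn h (fun t => k t + (h u - k u)) (Icc u v) := by
    refine Complex.isCoveringMap_exp.isSeparatedMap.eqOn_of_comp_eqOn
      Complex.isCoveringMap_exp.isLocalHomeomorph.isLocallyInjective isPreconnected_Icc hh.1
      (kc.add continuousOn_const) (fun t ht => Subtype.ext ?_) hu (by ring)
    simp [hh.2 t ht, ke t ht, Complex.exp_add, h1]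
  have := key hv
  simp only at this
  rw [this]; ring

lemma exists_isLogOn {f : ℝ → ℂ} {u v : ℝ} (huv : u ≤ v) (hf : ContinuousOn f (Icc u v))
    (h0 : ∀ t ∈ Icc u v, f t ≠ 0) : ∃ h, IsLogOn h f u v :=
  exists_log_of_convex (convex_Icc u v) (nonempty_Icc.2 huv) hf h0

lemma IsLogOn.mono {h f : ℝ → ℂ} {u v u' v' : ℝ} (hh : IsLogOn h f u v) (hu : u ≤ u')
    (hv : v' ≤ v) : IsLogOn h f u' v' :=
  ⟨hh.1.mono (Icc_subset_Icc hu hv), fun t ht => hh.2 t (Icc_subset_Icc hu hv ht)⟩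

lemma logVar_add {f : ℝ → ℂ} {u v w : ℝ} (huv : u ≤ v) (hvw : v ≤ w)
    (hf : ContinuousOn f (Icc u w)) (h0 : ∀ t ∈ Icc u w, f t ≠ 0) :
    logVar f u w = logVar f u v + logVar f v w := by
  obtain ⟨h, hh⟩ := exists_isLogOn (huv.trans hvw) hf h0
  rw [logVar_eq (huv.trans hvw) hh, logVar_eq huv (hh.mono le_rfl hvw),
    logVar_eq hvw (hh.mono huv le_rfl)]
  ring

lemma logVar_neg {f g : ℝ → ℂ} {u v : ℝ} (huv : u ≤ v)
    (hf : ContinuousOn f (Icc u v)) (h0 : ∀ t ∈ Icc u v, f t ≠ 0)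
    (hg : ∀ t, g t = - f t) : logVar g u v = logVar f u v := by
  obtain ⟨h, hh⟩ := exists_isLogOn huv hf h0
  rw [logVar_eq huv hh, logVar_eq (h := fun t => h t + Real.pi * Complex.I) huv
    ⟨hh.1.add continuousOn_const, fun t ht => by
      rw [Complex.exp_add, hh.2 t ht, Complex.exp_pi_mul_I, hg]; ring⟩]
  ring

lemma exp_logVar {f : ℝ → ℂ} {u v : ℝ} (huv : u ≤ v)
    (hf : ContinuousOn f (Icc u v)) (h0 : ∀ t ∈ Icc u v, f t ≠ 0) :
    Complex.exp (logVar f u v) = f v / f u := by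
  obtain ⟨h, hh⟩ := exists_isLogOn huv hf h0
  rw [logVar_eq huv hh, Complex.exp_sub, hh.2 _ (right_mem_Icc.2 huv),
    hh.2 _ (left_mem_Icc.2 huv)]

/-- The logarithmic variations along the two boundary paths of a rectangle agree, because a
nonvanishing function on the rectangle has a continuous logarithm there. -/
lemma logVar_rect {F : ℝ → ℝ → ℂ} {s₀ s₁ t₀ t₁ : ℝ} (hs : s₀ ≤ s₁) (ht : t₀ ≤ t₁)
    (hF : ContinuousOn (fun x : ℝ × ℝ => F x.1 x.2) (Icc s₀ s₁ ×ˢ Icc t₀ t₁))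
    (h0 : ∀ s ∈ Icc s₀ s₁, ∀ t ∈ Icc t₀ t₁, F s t ≠ 0) :
    logVar (fun s => F s t₀) s₀ s₁ + logVar (fun t => F s₁ t) t₀ t₁ =
      logVar (fun t => F s₀ t) t₀ t₁ + logVar (fun s => F s t₁) s₀ s₁ := by
  obtain ⟨h, hc, he⟩ := exists_log_of_convex ((convex_Icc s₀ s₁).prod (convex_Icc t₀ t₁))
    ((nonempty_Icc.2 hs).prod (nonempty_Icc.2 ht)) hF (fun x hx => h0 _ hx.1 _ hx.2)
  have H1 : ∀ t ∈ Icc t₀ t₁, logVar (fun s => F s t) s₀ s₁ = h (s₁, t) - h (s₀, t) :=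
    fun t ht' => logVar_eq (h := fun s => h (s, t)) hs
      ⟨hc.comp (by fun_prop) (fun s hs' => ⟨hs', ht'⟩), fun s hs' => he (s, t) ⟨hs', ht'⟩⟩
  have H2 : ∀ s ∈ Icc s₀ s₁, logVar (fun t => F s t) t₀ t₁ = h (s, t₁) - h (s, t₀) :=
    fun s hs' => logVar_eq (h := fun t => h (s, t)) ht
      ⟨hc.comp (by fun_prop) (fun t ht' => ⟨hs', ht'⟩), fun t ht' => he (s, t) ⟨hs', ht'⟩⟩
  rw [H1 _ (left_mem_Icc.2 ht), H1 _ (right_mem_Icc.2 ht), H2 _ (left_mem_Icc.2 hs),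
    H2 _ (right_mem_Icc.2 hs)]
  ring

/-- If `f` stays in the open half-plane around the direction of its initial value `f u`, its
argument varies by less than a quarter-turn. -/
lemma abs_im_logVar_lt {f : ℝ → ℂ} {u v : ℝ} (huv : u ≤ v) (hf : ContinuousOn f (Icc u v))
    (h0 : f u ≠ 0) (hre : ∀ t ∈ Icc u v, 0 < (f t * (starRingEnd ℂ) (f u)).re) :
    |(logVar f u v).im| < Real.pi / 2 := by
  set c := (starRingEnd ℂ) (f u) with hc
  have hc0 : c ≠ 0 := by simpa [hc] using h0
  have hlog : IsLogOn (fun t => Complex.log (f t * c) - Complex.log c) f u v := by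
    refine ⟨?_, fun t ht => ?_⟩
    · exact ((hf.mul continuousOn_const).clog fun t ht => Or.inl (hre t ht)).sub
        continuousOn_const
    · have : f t * c ≠ 0 := fun h => by have := hre t ht; simp [h] at this
      rw [Complex.exp_sub, Complex.exp_log this, Complex.exp_log hc0]
      field_simp
  rw [logVar_eq huv hlog]
  have e : (Complex.log (f u * c)).im = 0 := by
    rw [Complex.log_im, hc, Complex.mul_conj, Complex.arg_ofReal_of_nonneg (Complex.normSq_nonneg _)]
  have := Complex.abs_arg_lt_pi_div_two_iff.2 (Or.inl (hre v (right_mem_Icc.2 huv)))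
  simpa [e, Complex.log_im] using this

/-! ### The tripod identity -/

/-- A path from `p` to a point at distance at least `r` reaches the circle of radius `r` about `p`
for a first time, and stays in the closed disc until then. -/
lemma exists_first_hit {a : ℝ → ℂ} {p : ℂ} (ha : ContinuousOn a (Icc 0 1)) (h0 : a 0 = p)
    {r : ℝ} (hr : 0 < r) (h1 : r ≤ ‖a 1 - p‖) :
    ∃ α ∈ Ioc (0:ℝ) 1, ‖a α - p‖ = r ∧ ∀ s ∈ Icc 0 α, ‖a s - p‖ ≤ r := by
  have hφ : ContinuousOn (fun s => ‖a s - p‖) (Icc 0 1) := (ha.sub continuousOn_const).norm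
  have hcl : IsClosed (Icc (0:ℝ) 1 ∩ (fun s => ‖a s - p‖) ⁻¹' Ici r) :=
    hφ.preimage_isClosed_of_isClosed isClosed_Icc isClosed_Ici
  obtain ⟨α, ⟨hα, hαr⟩, hmin⟩ := (isCompact_Icc.of_isClosed_subset hcl
    inter_subset_left).exists_isLeast ⟨1, by simp, h1⟩
  have hIVT := intermediate_value_Icc hα.1 (hφ.mono (Icc_subset_Icc le_rfl hα.2))
  obtain ⟨s, hs, hsr⟩ := hIVT (show r ∈ _ from ⟨by simp [h0, hr.le], hαr⟩)
  have hsα : s = α := le_antisymm hs.2 (hmin ⟨⟨hs.1, hs.2.trans hα.2⟩, hsr.ge⟩)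
  subst hsα
  refine ⟨s, ⟨lt_of_le_of_ne hα.1 ?_, hα.2⟩, hsr, fun t ht => ?_⟩
  · rintro rfl
    simp [h0] at hsr
    linarith
  · by_contra! hlt
    have := hmin ⟨⟨ht.1, ht.2.trans hα.2⟩, hlt.le⟩
    have : t = s := le_antisymm ht.2 this
    subst this
    linarith

/-- Two arcs issuing from `p` and otherwise disjoint. -/
structure ArcPair (a b : ℝ → ℂ) (p : ℂ) : Prop where
  cont_left : ContinuousOn a (Icc 0 1)
  cont_right : ContinuousOn b (Icc 0 1)
  left_zero : a 0 = p
  right_zero : b 0 = p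
  ne : ∀ s ∈ Icc (0:ℝ) 1, ∀ t ∈ Icc (0:ℝ) 1, (0 < s ∨ 0 < t) → a s ≠ b t

/-- The variation of `log (a s - b t)` along a path in the parameter square from
`(0, β)` to `(α, 0)` through `(α, β)`. -/
def swapVar (a b : ℝ → ℂ) (α β : ℝ) : ℂ :=
  logVar (fun s => a s - b β) 0 α - logVar (fun t => b t - a α) 0 β

/-- The path of `swapVar a b 1 1` can be pushed towards the corner `(0, 0)` of the parameter square,
where `a s - b t` vanishes, across the rectangles `[0, 1] × [β, 1]` and `[α, 1] × [0, β]`. -/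
lemma ArcPair.swapVar_shrink {a b : ℝ → ℂ} {p : ℂ} (H : ArcPair a b p) {α β : ℝ}
    (hα : α ∈ Ioc (0:ℝ) 1) (hβ : β ∈ Ioc (0:ℝ) 1) :
    swapVar a b 1 1 = swapVar a b α β + logVar (fun s => a s - p) α 1
      - logVar (fun t => b t - p) β 1 := by
  obtain ⟨hα0, hα1⟩ := hα
  obtain ⟨hβ0, hβ1⟩ := hβ
  have hF : ContinuousOn (fun x : ℝ × ℝ => a x.1 - b x.2) (Icc 0 1 ×ˢ Icc 0 1) :=
    (H.cont_left.comp continuousOn_fst fun x hx => hx.1).sub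
      (H.cont_right.comp continuousOn_snd fun x hx => hx.2)
  have hFs : ∀ t ∈ Icc (0:ℝ) 1, ContinuousOn (fun s => a s - b t) (Icc 0 1) :=
    fun t _ => H.cont_left.sub continuousOn_const
  have hFt : ∀ s ∈ Icc (0:ℝ) 1, ContinuousOn (fun t => a s - b t) (Icc 0 1) :=
    fun t _ => continuousOn_const.sub H.cont_right
  have m1 : (1:ℝ) ∈ Icc (0:ℝ) 1 := by simp
  have mα : α ∈ Icc (0:ℝ) 1 := ⟨hα0.le, hα1⟩
  have mβ : β ∈ Icc (0:ℝ) 1 := ⟨hβ0.le, hβ1⟩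
  have R1 := logVar_rect (F := fun s t => a s - b t) (zero_le_one) hβ1
    (hF.mono (prod_mono le_rfl (Icc_subset_Icc hβ0.le le_rfl)))
    (fun s hs t ht => sub_ne_zero.2
      (H.ne s hs t ⟨hβ0.le.trans ht.1, ht.2⟩ (Or.inr (hβ0.trans_le ht.1))))
  have R2 := logVar_rect (F := fun s t => a s - b t) hα1 hβ0.le
    (hF.mono (prod_mono (Icc_subset_Icc hα0.le le_rfl) (Icc_subset_Icc le_rfl hβ1)))
    (fun s hs t ht => sub_ne_zero.2
      (H.ne s ⟨hα0.le.trans hs.1, hs.2⟩ t ⟨ht.1, ht.2.trans hβ1⟩ (Or.inl (hα0.trans_le hs.1))))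
  have A1 := logVar_add hα0.le hα1 (hFs β mβ)
    (fun s hs => sub_ne_zero.2 (H.ne s hs β mβ (Or.inr hβ0)))
  have A2 := logVar_add hβ0.le hβ1 (hFt 1 m1)
    (fun t ht => sub_ne_zero.2 (H.ne 1 m1 t ht (Or.inl one_pos)))
  have N1 : logVar (fun t => b t - a 1) 0 1 = logVar (fun t => a 1 - b t) 0 1 :=
    logVar_neg zero_le_one (hFt 1 m1)
      (fun t ht => sub_ne_zero.2 (H.ne 1 m1 t ht (Or.inl one_pos))) (fun t => by ring)
  have N2 : logVar (fun t => b t - a α) 0 β = logVar (fun t => a α - b t) 0 β :=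
    logVar_neg hβ0.le ((hFt α mα).mono (Icc_subset_Icc le_rfl hβ1))
      (fun t ht => sub_ne_zero.2 (H.ne α mα t ⟨ht.1, ht.2.trans hβ1⟩ (Or.inl hα0)))
      (fun t => by ring)
  have N3 : logVar (fun t => b t - p) β 1 = logVar (fun t => a 0 - b t) β 1 :=
    logVar_neg hβ1 ((hFt 0 (by simp)).mono (Icc_subset_Icc hβ0.le le_rfl))
      (fun t ht => sub_ne_zero.2 (H.ne 0 (by simp) t ⟨hβ0.le.trans ht.1, ht.2⟩
        (Or.inr (hβ0.trans_le ht.1)))) (fun t => by rw [H.left_zero]; ring)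
  simp only [H.right_zero] at R2
  rw [swapVar, swapVar, N1, N2, N3]
  linear_combination -R1 - R2 + A1 - A2

lemma ArcPair.exp_swapVar {a b : ℝ → ℂ} {p : ℂ} (H : ArcPair a b p) :
    Complex.exp (swapVar a b 1 1) = - ((a 1 - p) / (b 1 - p)) := by
  have m1 : (1:ℝ) ∈ Icc (0:ℝ) 1 := by simp
  rw [swapVar, Complex.exp_sub,
    exp_logVar (f := fun s => a s - b 1) zero_le_one (H.cont_left.sub continuousOn_const)
      (fun s hs => sub_ne_zero.2 (H.ne s hs 1 m1 (Or.inr one_pos))),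
    exp_logVar (f := fun t => b t - a 1) zero_le_one (H.cont_right.sub continuousOn_const)
      (fun t ht => sub_ne_zero.2 (H.ne 1 m1 t ht (Or.inl one_pos)).symm),
    H.left_zero, H.right_zero]
  have h1 : a 1 - b 1 ≠ 0 := sub_ne_zero.2 (H.ne 1 m1 1 m1 (Or.inr one_pos))
  have h2 : b 1 - a 1 ≠ 0 := sub_ne_zero.2 (H.ne 1 m1 1 m1 (Or.inr one_pos)).symm
  have h3 : a 1 - p ≠ 0 := sub_ne_zero.2 (by
    have := H.ne 1 m1 0 (by simp) (Or.inl one_pos); rwa [H.right_zero] at this)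
  have h4 : b 1 - p ≠ 0 := sub_ne_zero.2 (by
    have := H.ne 0 (by simp) 1 m1 (Or.inr one_pos); rw [H.left_zero] at this; exact this.symm)
  have h5 : p - b 1 ≠ 0 := sub_ne_zero.2 (sub_ne_zero.1 h4).symm
  have h6 : p - a 1 ≠ 0 := sub_ne_zero.2 (sub_ne_zero.1 h3).symm
  field_simp
  ring

/-- A point of a closed disc, seen from a point of the bounding circle, lies in the open
half-plane containing the centre. -/
lemma re_mul_conj_pos {x y p : ℂ} (hxy : x ≠ y) (h : ‖x - p‖ ≤ ‖y - p‖) :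
    0 < ((x - y) * (starRingEnd ℂ) (p - y)).re := by
  have h1 : ‖x - p‖ ^ 2 ≤ ‖y - p‖ ^ 2 := by gcongr
  have h2 : 0 < ‖x - y‖ ^ 2 := by
    have := norm_pos_iff.2 (sub_ne_zero.2 hxy); positivity
  simp only [← Complex.normSq_eq_norm_sq, Complex.normSq_apply, Complex.sub_re,
    Complex.sub_im] at h1 h2
  simp only [Complex.mul_re, Complex.sub_re, Complex.sub_im, Complex.conj_re, Complex.conj_im]
  nlinarith

/-- If both arcs are cut where they first reach the circle of radius `r` about `p`, each of the two
terms of `swapVar` is less than a quarter-turn. -/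
lemma ArcPair.abs_im_swapVar_lt {a b : ℝ → ℂ} {p : ℂ} (H : ArcPair a b p) {α β r : ℝ}
    (hr : 0 < r) (hα : α ∈ Ioc (0:ℝ) 1) (hβ : β ∈ Ioc (0:ℝ) 1)
    (ha : ‖a α - p‖ = r) (ha' : ∀ s ∈ Icc 0 α, ‖a s - p‖ ≤ r)
    (hb : ‖b β - p‖ = r) (hb' : ∀ s ∈ Icc 0 β, ‖b s - p‖ ≤ r) :
    |(swapVar a b α β).im| < Real.pi := by
  have mα : α ∈ Icc (0:ℝ) 1 := ⟨hα.1.le, hα.2⟩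
  have mβ : β ∈ Icc (0:ℝ) 1 := ⟨hβ.1.le, hβ.2⟩
  have hab : p - b β ≠ 0 := by rw [← norm_pos_iff, norm_sub_rev, hb]; exact hr
  have haa : p - a α ≠ 0 := by rw [← norm_pos_iff, norm_sub_rev, ha]; exact hr
  have h1 : |(logVar (fun s => a s - b β) 0 α).im| < Real.pi / 2 := by
    refine abs_im_logVar_lt hα.1.le ((H.cont_left.mono (Icc_subset_Icc le_rfl hα.2)).sub
      continuousOn_const) (by rwa [H.left_zero]) fun t ht => ?_
    rw [H.left_zero]
    exact re_mul_conj_pos (H.ne t ⟨ht.1, ht.2.trans hα.2⟩ β mβ (Or.inr hβ.1))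
      (by rw [hb]; exact ha' t ht)
  have h2 : |(logVar (fun t => b t - a α) 0 β).im| < Real.pi / 2 := by
    refine abs_im_logVar_lt hβ.1.le ((H.cont_right.mono (Icc_subset_Icc le_rfl hβ.2)).sub
      continuousOn_const) (by rwa [H.right_zero]) fun t ht => ?_
    rw [H.right_zero]
    exact re_mul_conj_pos (H.ne α mα t ⟨ht.1, ht.2.trans hβ.2⟩ (Or.inl hα.1)).symm
      (by rw [ha]; exact hb' t ht)
  rw [swapVar, Complex.sub_im]
  rw [abs_lt] at *
  constructor <;> linarith

/-- As two points exchange places on an embedded tripod with arms `a`, `b`, `c`, the direction from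
one to the other makes exactly a half-turn. -/
lemma tripod {a b c : ℝ → ℂ} {p : ℂ} (Hab : ArcPair a b p) (Hbc : ArcPair b c p)
    (Hca : ArcPair c a p) :
    (swapVar a b 1 1 + swapVar b c 1 1 + swapVar c a 1 1).im = Real.pi ∨
    (swapVar a b 1 1 + swapVar b c 1 1 + swapVar c a 1 1).im = -Real.pi := by
  have m1 : (1:ℝ) ∈ Icc (0:ℝ) 1 := by simp
  have na : a 1 - p ≠ 0 := sub_ne_zero.2 (by
    have := Hab.ne 1 m1 0 (by simp) (Or.inl one_pos); rwa [Hab.right_zero] at this)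
  have nb : b 1 - p ≠ 0 := sub_ne_zero.2 (by
    have := Hbc.ne 1 m1 0 (by simp) (Or.inl one_pos); rwa [Hbc.right_zero] at this)
  have nc : c 1 - p ≠ 0 := sub_ne_zero.2 (by
    have := Hca.ne 1 m1 0 (by simp) (Or.inl one_pos); rwa [Hca.right_zero] at this)
  obtain ⟨r, hr, ra, rb, rc⟩ : ∃ r, 0 < r ∧ r ≤ ‖a 1 - p‖ ∧ r ≤ ‖b 1 - p‖ ∧ r ≤ ‖c 1 - p‖ :=
    ⟨min ‖a 1 - p‖ (min ‖b 1 - p‖ ‖c 1 - p‖),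
      lt_min (norm_pos_iff.2 na) (lt_min (norm_pos_iff.2 nb) (norm_pos_iff.2 nc)),
      min_le_left _ _, (min_le_right _ _).trans (min_le_left _ _),
      (min_le_right _ _).trans (min_le_right _ _)⟩
  obtain ⟨α, hα, a1, a2⟩ := exists_first_hit Hab.cont_left Hab.left_zero hr ra
  obtain ⟨β, hβ, b1, b2⟩ := exists_first_hit Hbc.cont_left Hbc.left_zero hr rb
  obtain ⟨γ, hγ, c1, c2⟩ := exists_first_hit Hca.cont_left Hca.left_zero hr rc
  set Y := swapVar a b 1 1 + swapVar b c 1 1 + swapVar c a 1 1 with hY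
  -- The contributions of the outer parts of the three arms cancel.
  have hsmall : Y = swapVar a b α β + swapVar b c β γ + swapVar c a γ α := by
    rw [hY, Hab.swapVar_shrink hα hβ, Hbc.swapVar_shrink hβ hγ, Hca.swapVar_shrink hγ hα]
    ring
  have hlt : |Y.im| < 3 * Real.pi := by
    have h1 := Hab.abs_im_swapVar_lt hr hα hβ a1 a2 b1 b2
    have h2 := Hbc.abs_im_swapVar_lt hr hβ hγ b1 b2 c1 c2
    have h3 := Hca.abs_im_swapVar_lt hr hγ hα c1 c2 a1 a2
    rw [hsmall, Complex.add_im, Complex.add_im]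
    rw [abs_lt] at *
    constructor <;> linarith
  have hexp : Complex.exp Y = Complex.exp (Real.pi * Complex.I) := by
    rw [hY, Complex.exp_add, Complex.exp_add, Hab.exp_swapVar, Hbc.exp_swapVar,
      Hca.exp_swapVar, Complex.exp_pi_mul_I]
    field_simp
  obtain ⟨n, hn⟩ := Complex.exp_eq_exp_iff_exists_int.1 hexp
  have him : Y.im = (1 + 2 * n) * Real.pi := by
    rw [hn]; simp; ring
  have hpi := Real.pi_pos
  rw [him, abs_lt] at hlt
  have u1 : (1 + 2 * n : ℝ) < 3 := by nlinarith
  have u2 : (-3 : ℝ) < 1 + 2 * n := by nlinarith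
  have v1 : 1 + 2 * n < 3 := by exact_mod_cast u1
  have v2 : -3 < 1 + 2 * n := by exact_mod_cast u2
  obtain rfl | rfl : n = 0 ∨ n = -1 := by omega
  · left; rw [him]; simp
  · right; rw [him]; norm_num

/-! ### The complex `K₅ − (4,5)` -/

/-- The point with parameter `t` on the edge from `i` to `j`. -/
def edgePt (i j : Fin 5) (t : ℝ) : Fin 5 → ℝ := (1 - t) • vert i + t • vert j

lemma edgePt_zero (i j : Fin 5) : edgePt i j 0 = vert i := by simp [edgePt]

lemma edgePt_one (i j : Fin 5) : edgePt i j 1 = vert j := by simp [edgePt]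

lemma isEdge_iff (i j : Fin 5) :
    IsEdge i j ↔ i ≠ j ∧ ¬ (i = 3 ∧ j = 4) ∧ ¬ (i = 4 ∧ j = 3) := by
  rw [IsEdge, Ne, Ne, Set.pair_eq_pair_iff]
  tauto

lemma IsEdge.symm {i j : Fin 5} (h : IsEdge i j) : IsEdge j i := by
  rw [isEdge_iff] at *; tauto

lemma edgePt_mem {i j : Fin 5} (h : IsEdge i j) {t : ℝ} (ht : t ∈ Icc (0:ℝ) 1) :
    edgePt i j t ∈ K5m45 := by
  simp only [K5m45, mem_iUnion]
  exact ⟨i, j, h, 1 - t, t, by linarith [ht.2], ht.1, by ring, rfl⟩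

lemma vert_mem (k : Fin 5) : vert k ∈ K5m45 := by
  rcases eq_or_ne k 0 with rfl | hk
  · rw [← edgePt_zero 0 1]
    exact edgePt_mem ((isEdge_iff _ _).2 (by decide)) (by simp)
  · rw [← edgePt_zero k 0]
    exact edgePt_mem ((isEdge_iff _ _).2 ⟨hk, by simp, by simp⟩) (by simp)

lemma continuous_edgePt (i j : Fin 5) : Continuous (edgePt i j) := by
  unfold edgePt; fun_prop

lemma edgePt_ne_of_disjoint {i j k l : Fin 5} (hij : i ≠ j) (hik : i ≠ k) (hil : i ≠ l)
    (hjk : j ≠ k) (hjl : j ≠ l) (s t : ℝ) : edgePt i j s ≠ edgePt k l t := by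
  intro h
  have h1 := congrFun h i
  have h2 := congrFun h j
  simp [edgePt, vert, hij, hij.symm, hik, hil, hjk, hjl] at h1 h2
  linarith

lemma edgePt_ne_of_adjacent {v i j : Fin 5} (hvi : v ≠ i) (hvj : v ≠ j) (hij : i ≠ j)
    {s t : ℝ} (hst : s ≠ 0 ∨ t ≠ 0) : edgePt v i s ≠ edgePt v j t := by
  intro h
  have h1 := congrFun h i
  have h2 := congrFun h j
  simp [edgePt, vert, hij, hij.symm, hvi.symm, hvj.symm] at h1 h2
  rcases hst with hs | ht
  · exact hs h1
  · exact ht h2.symm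

/-- The variation of the argument of `g x - g (vert k)` as `x` runs along the edge from `i`
to `j`. -/
def angVar (g : (Fin 5 → ℝ) → ℂ) (i j k : Fin 5) : ℝ :=
  (logVar (fun t => g (edgePt i j t) - g (vert k)) 0 1).im

section Embedding

variable {g : (Fin 5 → ℝ) → ℂ}

lemma continuousOn_edge (hcont : ContinuousOn g K5m45) {i j : Fin 5} (h : IsEdge i j) :
    ContinuousOn (fun t => g (edgePt i j t)) (Icc 0 1) :=
  hcont.comp (continuous_edgePt i j).continuousOn fun _ ht => edgePt_mem h ht

lemma edge_sub_vert_ne (hinj : InjOn g K5m45) {i j k : Fin 5} (h : IsEdge i j)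
    (hki : k ≠ i) (hkj : k ≠ j) {t : ℝ} (ht : t ∈ Icc (0:ℝ) 1) :
    g (edgePt i j t) - g (vert k) ≠ 0 := by
  rw [sub_ne_zero, hinj.ne_iff (edgePt_mem h ht) (vert_mem k), ← edgePt_zero k k]
  exact edgePt_ne_of_disjoint h.1 hki.symm hki.symm hkj.symm hkj.symm _ _

lemma angVar_rev (hcont : ContinuousOn g K5m45) (hinj : InjOn g K5m45) {i j k : Fin 5}
    (h : IsEdge i j) (hki : k ≠ i) (hkj : k ≠ j) : angVar g j i k = - angVar g i j k := by
  obtain ⟨l, hl⟩ := exists_isLogOn (f := fun t => g (edgePt i j t) - g (vert k)) zero_le_one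
    ((continuousOn_edge hcont h).sub continuousOn_const)
    (fun t ht => edge_sub_vert_ne hinj h hki hkj ht)
  have hm : MapsTo (fun t : ℝ => 1 - t) (Icc 0 1) (Icc 0 1) :=
    fun t ht => ⟨by linarith [ht.2], by linarith [ht.1]⟩
  have hl' : IsLogOn (fun t => l (1 - t)) (fun t => g (edgePt j i t) - g (vert k)) 0 1 := by
    refine ⟨hl.1.comp (by fun_prop) hm, fun t ht => ?_⟩
    have e : edgePt j i t = edgePt i j (1 - t) := by
      simp only [edgePt, sub_sub_cancel]; rw [add_comm]
    simp only [e]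
    exact hl.2 _ (hm ht)
  rw [angVar, angVar, logVar_eq zero_le_one hl, logVar_eq zero_le_one hl']
  simp

/-- Moving two points along two disjoint edges gives a map from a square to `ℂ \ {0}`. -/
lemma angVar_square (hcont : ContinuousOn g K5m45) (hinj : InjOn g K5m45) {i j k l : Fin 5}
    (hij : IsEdge i j) (hkl : IsEdge k l) (hik : i ≠ k) (hil : i ≠ l) (hjk : j ≠ k)
    (hjl : j ≠ l) :
    angVar g i j k + angVar g k l j = angVar g k l i + angVar g i j l := by
  have hF : ContinuousOn (fun x : ℝ × ℝ => g (edgePt i j x.1) - g (edgePt k l x.2))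
      (Icc 0 1 ×ˢ Icc 0 1) :=
    ((continuousOn_edge hcont hij).comp continuousOn_fst fun x hx => hx.1).sub
      ((continuousOn_edge hcont hkl).comp continuousOn_snd fun x hx => hx.2)
  have R := logVar_rect (F := fun s t => g (edgePt i j s) - g (edgePt k l t)) zero_le_one
    zero_le_one hF (fun s hs t ht => by
      rw [sub_ne_zero, hinj.ne_iff (edgePt_mem hij hs) (edgePt_mem hkl ht)]
      exact edgePt_ne_of_disjoint hij.1 hik hil hjk hjl _ _)
  have N : ∀ m, m ≠ k → m ≠ l → logVar (fun t => g (vert m) - g (edgePt k l t)) 0 1 =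
      logVar (fun t => g (edgePt k l t) - g (vert m)) 0 1 := fun m hk hl =>
    logVar_neg zero_le_one ((continuousOn_edge hcont hkl).sub continuousOn_const)
      (fun t ht => edge_sub_vert_ne hinj hkl hk hl ht) (fun t => by ring)
  simp only [edgePt_zero, edgePt_one] at R
  rw [N j hjk hjl, N i hik hil] at R
  simpa [angVar] using congrArg Complex.im R

lemma arcPair_edges (hcont : ContinuousOn g K5m45) (hinj : InjOn g K5m45) {v i j : Fin 5}
    (hi : IsEdge v i) (hj : IsEdge v j) (hij : i ≠ j) :
    ArcPair (fun t => g (edgePt v i t)) (fun t => g (edgePt v j t)) (g (vert v)) where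
  cont_left := continuousOn_edge hcont hi
  cont_right := continuousOn_edge hcont hj
  left_zero := by rw [edgePt_zero]
  right_zero := by rw [edgePt_zero]
  ne s hs t ht hst := by
    rw [hinj.ne_iff (edgePt_mem hi hs) (edgePt_mem hj ht)]
    exact edgePt_ne_of_adjacent hi.1 hj.1 hij (hst.imp ne_of_gt ne_of_gt)

lemma angVar_tripod (hcont : ContinuousOn g K5m45) (hinj : InjOn g K5m45) {v i j k : Fin 5}
    (hi : IsEdge v i) (hj : IsEdge v j) (hk : IsEdge v k)
    (hij : i ≠ j) (hjk : j ≠ k) (hki : k ≠ i) :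
    (angVar g v i j - angVar g v j i) + (angVar g v j k - angVar g v k j)
      + (angVar g v k i - angVar g v i k) = Real.pi ∨
    (angVar g v i j - angVar g v j i) + (angVar g v j k - angVar g v k j)
      + (angVar g v k i - angVar g v i k) = -Real.pi := by
  have := tripod (arcPair_edges hcont hinj hi hj hij) (arcPair_edges hcont hinj hj hk hjk)
    (arcPair_edges hcont hinj hk hi hki)
  simpa [swapVar, edgePt_one, angVar] using this

/-- The winding number is the sum of the contributions of the three edges of the triangle. -/
lemma two_pi_mul_winding {k : Fin 5} {n : ℤ}
    (h : IsWindingNumber (fun t => g (triLoop t)) (g (vert k)) n) :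
    2 * Real.pi * n = angVar g 0 1 k + angVar g 1 2 k + angVar g 2 0 k := by
  obtain ⟨l, hc, he, hn⟩ := h
  have key : ∀ i j : Fin 5, ∀ u ∈ Icc (0:ℝ) (2/3),
      (∀ t ∈ Icc (0:ℝ) 1, triLoop (u + t / 3) = edgePt i j t) →
      angVar g i j k = (l (u + 1 / 3)).im - (l u).im := by
    intro i j u hu htri
    have hm : MapsTo (fun t : ℝ => u + t / 3) (Icc 0 1) (Icc 0 1) := fun t ht =>
      ⟨by linarith [hu.1, ht.1], by linarith [hu.2, ht.2]⟩
    have hl : IsLogOn (fun t => l (u + t / 3)) (fun t => g (edgePt i j t) - g (vert k)) 0 1 := by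
      refine ⟨hc.comp (by fun_prop) hm, fun t ht => ?_⟩
      simp only [← htri t ht]
      exact eq_sub_of_add_eq' (he _ (hm ht)).symm
    rw [angVar, logVar_eq zero_le_one hl]
    simp
  have k1 := key 0 1 0 (by norm_num) (fun t ht => by
    rw [triLoop, if_pos (by linarith [ht.2]), edgePt]
    congr 2 <;> ring)
  have k2 := key 1 2 (1/3) (by norm_num) (fun t ht => by
    rcases ht.1.eq_or_lt with rfl | h0
    · rw [triLoop, if_pos (by norm_num), edgePt]; norm_num
    rw [triLoop, if_neg (by linarith), if_pos (by linarith [ht.2]), edgePt]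
    congr 2 <;> ring)
  have k3 := key 2 0 (2/3) (by norm_num) (fun t ht => by
    rcases ht.1.eq_or_lt with rfl | h0
    · rw [triLoop, if_neg (by norm_num), if_pos (by norm_num), edgePt]; norm_num
    rw [triLoop, if_neg (by linarith), if_neg (by linarith), edgePt]
    congr 2 <;> ring)
  have hn' := congrArg Complex.im hn
  simp at hn'
  norm_num at k1 k2 k3
  linarith

end Embedding

/-- For any embedding (continuous injective map) `g : K₅ − (4,5) → ℝ²` one has
`l(g) = w(g|K₃, g4) − w(g|K₃, g5) = ±1`. -/
theorem winding_difference_eq_pm_one_of_embedding (g : (Fin 5 → ℝ) → ℂ)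
    (hcont : ContinuousOn g K5m45) (hinj : InjOn g K5m45)
    (n4 n5 : ℤ)
    (h4 : IsWindingNumber (fun t => g (triLoop t)) (g (vert 3)) n4)
    (h5 : IsWindingNumber (fun t => g (triLoop t)) (g (vert 4)) n5) :
    n4 - n5 = 1 ∨ n4 - n5 = -1 := by
  have E : ∀ i j : Fin 5, (i ≠ j ∧ ¬ (i = 3 ∧ j = 4) ∧ ¬ (i = 4 ∧ j = 3)) → IsEdge i j :=
    fun i j => (isEdge_iff i j).2
  have Sq : ∀ i j k l : Fin 5, (i ≠ j ∧ ¬ (i = 3 ∧ j = 4) ∧ ¬ (i = 4 ∧ j = 3)) →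
      (k ≠ l ∧ ¬ (k = 3 ∧ l = 4) ∧ ¬ (k = 4 ∧ l = 3)) →
      (i ≠ k ∧ i ≠ l ∧ j ≠ k ∧ j ≠ l) →
      angVar g i j k + angVar g k l j = angVar g k l i + angVar g i j l :=
    fun i j k l h1 h2 h3 =>
      angVar_square hcont hinj (E i j h1) (E k l h2) h3.1 h3.2.1 h3.2.2.1 h3.2.2.2
  have Rv : ∀ i j k : Fin 5, (i ≠ j ∧ ¬ (i = 3 ∧ j = 4) ∧ ¬ (i = 4 ∧ j = 3)) →
      (k ≠ i ∧ k ≠ j) → angVar g j i k = - angVar g i j k :=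
    fun i j k h1 h2 => angVar_rev hcont hinj (E i j h1) h2.1 h2.2
  -- `w4 - w5` expresses `2π l(g)`; `y4`, `y5`, `y1` are the tripods `Y_4(1, 2, 3)`, `Y_5(1, 2, 3)`
  -- and `Y_1(2, 4, 5)`.
  have w4 := two_pi_mul_winding h4
  have w5 := two_pi_mul_winding h5
  have y4 := angVar_tripod hcont hinj (E 3 0 (by decide)) (E 3 1 (by decide)) (E 3 2 (by decide))
    (by decide) (by decide) (by decide)
  have y5 := angVar_tripod hcont hinj (E 4 0 (by decide)) (E 4 1 (by decide)) (E 4 2 (by decide))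
    (by decide) (by decide) (by decide)
  have y1 := angVar_tripod hcont hinj (E 0 1 (by decide)) (E 0 3 (by decide)) (E 0 4 (by decide))
    (by decide) (by decide) (by decide)
  -- The relations from squares, and the change of sign when an edge is reversed.
  have s0123 := Sq 0 1 2 3 (by decide) (by decide) (by decide)
  have s1203 := Sq 1 2 0 3 (by decide) (by decide) (by decide)
  have s2013 := Sq 2 0 1 3 (by decide) (by decide) (by decide)
  have s0124 := Sq 0 1 2 4 (by decide) (by decide) (by decide)
  have s1204 := Sq 1 2 0 4 (by decide) (by decide) (by decide)
  have s2014 := Sq 2 0 1 4 (by decide) (by decide) (by decide)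
  have s0314 := Sq 0 3 1 4 (by decide) (by decide) (by decide)
  have s0413 := Sq 0 4 1 3 (by decide) (by decide) (by decide)
  have s1324 := Sq 1 3 2 4 (by decide) (by decide) (by decide)
  have s1423 := Sq 1 4 2 3 (by decide) (by decide) (by decide)
  have s2304 := Sq 2 3 0 4 (by decide) (by decide) (by decide)
  have s2403 := Sq 2 4 0 3 (by decide) (by decide) (by decide)
  have r012 := Rv 0 1 2 (by decide) (by decide)
  have r013 := Rv 0 1 3 (by decide) (by decide)
  have r014 := Rv 0 1 4 (by decide) (by decide)
  have r120 := Rv 1 2 0 (by decide) (by decide)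
  have r123 := Rv 1 2 3 (by decide) (by decide)
  have r124 := Rv 1 2 4 (by decide) (by decide)
  have r201 := Rv 2 0 1 (by decide) (by decide)
  have r203 := Rv 2 0 3 (by decide) (by decide)
  have r204 := Rv 2 0 4 (by decide) (by decide)
  have r031 := Rv 0 3 1 (by decide) (by decide)
  have r032 := Rv 0 3 2 (by decide) (by decide)
  have r034 := Rv 0 3 4 (by decide) (by decide)
  have r041 := Rv 0 4 1 (by decide) (by decide)
  have r042 := Rv 0 4 2 (by decide) (by decide)
  have r043 := Rv 0 4 3 (by decide) (by decide)
  have r130 := Rv 1 3 0 (by decide) (by decide)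
  have r132 := Rv 1 3 2 (by decide) (by decide)
  have r134 := Rv 1 3 4 (by decide) (by decide)
  have r140 := Rv 1 4 0 (by decide) (by decide)
  have r142 := Rv 1 4 2 (by decide) (by decide)
  have r143 := Rv 1 4 3 (by decide) (by decide)
  have r230 := Rv 2 3 0 (by decide) (by decide)
  have r231 := Rv 2 3 1 (by decide) (by decide)
  have r234 := Rv 2 3 4 (by decide) (by decide)
  have r240 := Rv 2 4 0 (by decide) (by decide)
  have r241 := Rv 2 4 1 (by decide) (by decide)
  have r243 := Rv 2 4 3 (by decide) (by decide)
  have hpi := Real.pi_pos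
  have hl : 2 * Real.pi * ((n4 - n5 : ℤ) : ℝ) = 2 * Real.pi ∨
      2 * Real.pi * ((n4 - n5 : ℤ) : ℝ) = -(2 * Real.pi) := by
    push_cast
    rcases y4 with y4 | y4 <;> rcases y5 with y5 | y5
    -- `Y_4 = Y_5` makes `Y_1(2, 4, 5)` its own negative.
    · exfalso
      rcases y1 with y1 | y1 <;> linarith
    · left; linarith
    · right; linarith
    · exfalso
      rcases y1 with y1 | y1 <;> linarith
  have h2 : 2 * Real.pi ≠ 0 := by positivity
  rcases hl with hl | hl
  · left
    have : ((n4 - n5 : ℤ) : ℝ) = 1 := mul_left_cancel₀ h2 (by rw [hl]; ring)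
    exact_mod_cast this
  · right
    have : ((n4 - n5 : ℤ) : ℝ) = -1 := mul_left_cancel₀ h2 (by rw [hl]; ring)
    exact_mod_cast this
end
end

section
/- For any integer k there exists a continuous almost embedding g : K5−(4,5) → ℝ² such that w(g|_{K3}, g(4)) = k. -/
/-!
The wheel with hub `3` and rim `1 4 2 5` is `K₅ − (4,5)` with the edge `12` removed. Place its
vertices `1, …, 5` at `-3, 3, -i, 0, -2i`, and draw its edges as straight segments; this is an
embedding. The edge `12` is disjoint only from `34` and `35`, which lie in the disc of radius `2`
about `g(4) = 0`, so it may be drawn as an arc which runs along the circle of radius `3` from `-3`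
to `3`, turning by the angle `(2k+1)π`. The remaining two edges of the triangle return from `3`
through `-i` to `-3` in the lower half-plane, turning by `-π`; in total the triangle winds `k` times
around `0`.

Disjointness is checked in barycentric coordinates, where `x m` belongs to the vertex `m + 1`:
points `x`, `y` of disjoint edges satisfy `x m * y m = 0` for every `m`, and
`x 3 * x 4 = 0 = y 3 * y 4` as the edge `45` is missing (`lin_ne`, `arc_ne_lin`).
-/

open Set

noncomputable section

/-! ### The drawing -/

/-- The straight-line map with vertices `-3, 3, -i, 0, -2i`. -/
def linMap (x : Fin 5 → ℝ) : ℂ :=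
  ((3 * (x 1 - x 0) : ℝ) : ℂ) + ((-(x 2 + 2 * x 4) : ℝ) : ℂ) * Complex.I

/-- The parametrization of the edge `12` by an arc of the circle of radius `3`, which turns
by `(2k+1)π` as `x 0` decreases from `1` to `0`. -/
def arcMap (k : ℤ) (x : Fin 5 → ℝ) : ℂ :=
  3 * Complex.exp (((-((2 * k + 1) * Real.pi * x 0) : ℝ) : ℂ) * Complex.I)

open Classical in
/-- The almost embedding: the condition `x 0 * x 1 ≠ 0` singles out the interior of
the edge `12` in the complex. -/
def drawing (k : ℤ) (x : Fin 5 → ℝ) : ℂ :=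
  if x 0 * x 1 = 0 then linMap x else arcMap k x

/-! ### Barycentric coordinates on the complex -/

lemma seg_coord {i j : Fin 5} {x : Fin 5 → ℝ} (hx : x ∈ seg i j) :
    (∀ m, 0 ≤ x m) ∧ x 0 + x 1 + x 2 + x 3 + x 4 = 1 ∧ ∀ m, m ≠ i → m ≠ j → x m = 0 := by
  obtain ⟨a, b, ha, hb, hab, rfl⟩ := hx
  refine ⟨fun m => ?_, ?_, fun m hi hj => ?_⟩
  · simp only [vert, Pi.add_apply, Pi.smul_apply, Pi.single_apply, smul_eq_mul]
    split_ifs <;> simp [ha, hb, hab]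
  · have h : ∀ i : Fin 5, vert i 0 + vert i 1 + vert i 2 + vert i 3 + vert i 4 = 1 := by
      intro i
      fin_cases i <;> simp [vert]
    simp only [Pi.add_apply, Pi.smul_apply, smul_eq_mul]
    linear_combination a * h i + b * h j + hab
  · simp [vert, hi, hj]

lemma edge_coord {i j : Fin 5} (h : IsEdge i j) {x : Fin 5 → ℝ} (hx : x ∈ seg i j) :
    x 3 * x 4 = 0 := by
  obtain ⟨-, -, h0⟩ := seg_coord hx
  by_contra hne
  have h3 : x 3 ≠ 0 := left_ne_zero_of_mul hne
  have h4 : x 4 ≠ 0 := right_ne_zero_of_mul hne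
  have h3' : i = 3 ∨ j = 3 := by
    by_contra! hc
    exact h3 (h0 3 hc.1.symm hc.2.symm)
  have h4' : i = 4 ∨ j = 4 := by
    by_contra! hc
    exact h4 (h0 4 hc.1.symm hc.2.symm)
  obtain ⟨-, hne'⟩ := h
  rcases h3' with rfl | rfl <;> rcases h4' with h | h
  · simp at h
  · exact hne' (by rw [h])
  · exact hne' (by rw [h, Set.pair_comm])
  · simp at h

/-- In the complex, the locus `x 0 * x 1 ≠ 0` lies in the edge `12`. -/
lemma K5m45_subset : K5m45 ⊆ {x | x 0 * x 1 = 0} ∪ {x | x 0 + x 1 = 1} := by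
  intro x hx
  simp only [K5m45, mem_iUnion] at hx
  obtain ⟨i, j, -, hx⟩ := hx
  obtain ⟨-, hs, h0⟩ := seg_coord hx
  by_cases hne : x 0 * x 1 = 0
  · exact Or.inl hne
  right
  have h1 : i = 0 ∨ j = 0 := by
    by_contra! hc
    exact left_ne_zero_of_mul hne (h0 0 hc.1.symm hc.2.symm)
  have h2 : i = 1 ∨ j = 1 := by
    by_contra! hc
    exact right_ne_zero_of_mul hne (h0 1 hc.1.symm hc.2.symm)
  have h3 : ∀ m : Fin 5, m ≠ 0 → m ≠ 1 → x m = 0 := by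
    intro m hm0 hm1
    apply h0 <;> rintro rfl <;> rcases h1 with rfl | rfl <;> rcases h2 with h | h <;> simp_all
  have := h3 2 (by decide) (by decide)
  have := h3 3 (by decide) (by decide)
  have := h3 4 (by decide) (by decide)
  change x 0 + x 1 = 1
  linarith

/-! ### Continuity of the drawing -/

lemma exp_odd_pi (k : ℤ) :
    Complex.exp (((-((2 * k + 1) * Real.pi) : ℝ) : ℂ) * Complex.I) = -1 := by
  have h : ((-((2 * k + 1) * Real.pi) : ℝ) : ℂ) * Complex.I
      = -(Real.pi * Complex.I) + ((-k : ℤ) : ℂ) * (2 * Real.pi * Complex.I) := by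
    push_cast
    ring
  rw [h, Complex.exp_add, Complex.exp_int_mul_two_pi_mul_I, Complex.exp_neg, Complex.exp_pi_mul_I]
  norm_num

/-- The arc and the straight-line map agree at the end points of the edge `12`; hence `drawing`
is given by the arc on the closed edge. -/
lemma drawing_eq_arc (k : ℤ) {x : Fin 5 → ℝ} (h2 : x 2 = 0) (h4 : x 4 = 0)
    (h : x 0 + x 1 = 1) : drawing k x = arcMap k x := by
  unfold drawing
  split_ifs with h0
  · rcases mul_eq_zero.1 h0 with h0 | h1
    · have h1 : x 1 = 1 := by linarith
      simp [linMap, arcMap, h0, h1, h2, h4]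
    · have h0 : x 0 = 1 := by linarith
      simp only [linMap, arcMap, h0, h1, h2, h4, mul_one, exp_odd_pi]
      norm_num
  · rfl

lemma continuous_linMap : Continuous linMap := by
  unfold linMap
  fun_prop

lemma continuous_arcMap (k : ℤ) : Continuous (arcMap k) := by
  unfold arcMap
  fun_prop

lemma continuousOn_drawing (k : ℤ) : ContinuousOn (drawing k) K5m45 := by
  have hA : ContinuousOn (drawing k) {x | x 0 * x 1 = 0} :=
    continuous_linMap.continuousOn.congr fun x hx => if_pos hx
  have hB : ContinuousOn (drawing k) {x | x 2 = 0 ∧ x 4 = 0 ∧ x 0 + x 1 = 1} :=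
    (continuous_arcMap k).continuousOn.congr fun x hx => drawing_eq_arc k hx.1 hx.2.1 hx.2.2
  have hAc : IsClosed {x : Fin 5 → ℝ | x 0 * x 1 = 0} :=
    isClosed_eq (by fun_prop) (by fun_prop)
  have hBc : IsClosed {x : Fin 5 → ℝ | x 2 = 0 ∧ x 4 = 0 ∧ x 0 + x 1 = 1} :=
    (isClosed_eq (by fun_prop) (by fun_prop)).inter
      ((isClosed_eq (by fun_prop) (by fun_prop)).inter (isClosed_eq (by fun_prop) (by fun_prop)))
  refine (hA.union_of_isClosed hB hAc hBc).mono fun x hx => ?_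
  refine (K5m45_subset hx).imp id fun h => ?_
  simp only [K5m45, mem_iUnion] at hx
  obtain ⟨i, j, -, hx⟩ := hx
  obtain ⟨hn, hs, -⟩ := seg_coord hx
  have h : x 0 + x 1 = 1 := h
  have := hn 2
  have := hn 3
  have := hn 4
  exact ⟨by linarith, by linarith, h⟩

/-! ### Disjointness of non-adjacent edges -/

/-- The straight-line map separates points of disjoint edges other than `12`. Comparing real
parts forces both points into the span of the vertices `3, 4, 5`, which are mapped to the imaginary
axis in the order `4, 3, 5`. -/
lemma lin_ne {x y : Fin 5 → ℝ} (hx : ∀ m, 0 ≤ x m) (hy : ∀ m, 0 ≤ y m)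
    (sx : x 0 + x 1 + x 2 + x 3 + x 4 = 1) (sy : y 0 + y 1 + y 2 + y 3 + y 4 = 1)
    (x34 : x 3 * x 4 = 0) (y34 : y 3 * y 4 = 0) (x01 : x 0 * x 1 = 0) (y01 : y 0 * y 1 = 0)
    (hxy : ∀ m, x m * y m = 0) : linMap x ≠ linMap y := by
  intro h
  have hre : 3 * (x 1 - x 0) = 3 * (y 1 - y 0) := by
    simpa [linMap] using congrArg Complex.re h
  have him : -(x 2 + 2 * x 4) = -(y 2 + 2 * y 4) := by
    have := congrArg Complex.im h
    simp only [linMap, Complex.add_im, Complex.ofReal_im, Complex.im_ofReal_mul, Complex.I_im, mul_one, zero_add] at this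
    exact this
  have nx0 := hx 0
  have nx1 := hx 1
  have nx2 := hx 2
  have nx3 := hx 3
  have nx4 := hx 4
  have ny0 := hy 0
  have ny1 := hy 1
  have ny2 := hy 2
  have ny3 := hy 3
  have ny4 := hy 4
  have hz : x 0 = 0 ∧ x 1 = 0 ∧ y 0 = 0 ∧ y 1 = 0 := by
    rcases mul_eq_zero.1 x01 with a | a <;> rcases mul_eq_zero.1 y01 with b | b <;>
      rcases mul_eq_zero.1 (hxy 0) with c | c <;> rcases mul_eq_zero.1 (hxy 1) with d | d <;>
      refine ⟨?_, ?_, ?_, ?_⟩ <;> linarith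
  obtain ⟨a0, a1, b0, b1⟩ := hz
  rcases mul_eq_zero.1 (hxy 2) with a | a <;> rcases mul_eq_zero.1 (hxy 3) with b | b <;>
    rcases mul_eq_zero.1 (hxy 4) with c | c <;> rcases mul_eq_zero.1 x34 with d | d <;>
    rcases mul_eq_zero.1 y34 with e | e <;> linarith

/-- The arc lies on the circle of radius `3`, the edges `34` and `35` in the disc of radius `2`. -/
lemma arc_ne_lin (k : ℤ) (x : Fin 5 → ℝ) {y : Fin 5 → ℝ} (hy : ∀ m, 0 ≤ y m)
    (sy : y 0 + y 1 + y 2 + y 3 + y 4 = 1) (y0 : y 0 = 0) (y1 : y 1 = 0) :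
    arcMap k x ≠ linMap y := by
  intro h
  have h1 : ‖arcMap k x‖ = 3 := by
    rw [arcMap, norm_mul, Complex.norm_exp_ofReal_mul_I]
    simp
  have h2 : ‖linMap y‖ = |y 2 + 2 * y 4| := by
    rw [linMap, y0, y1, sub_zero, mul_zero, Complex.ofReal_zero, zero_add, norm_mul,
      Complex.norm_I, mul_one, Complex.norm_real, Real.norm_eq_abs, abs_neg]
  have := hy 2
  have := hy 3
  have := hy 4
  rw [abs_of_nonneg (by linarith)] at h2
  rw [h, h2] at h1
  linarith

lemma almostEmb_drawing (k : ℤ) : AlmostEmb (drawing k) := by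
  refine ⟨continuousOn_drawing k, fun i j p q hij hpq hd => ?_⟩
  rw [Set.disjoint_left]
  rintro _ ⟨x, hx, rfl⟩ ⟨y, hy, h⟩
  obtain ⟨nx, sx, zx⟩ := seg_coord hx
  obtain ⟨ny, sy, zy⟩ := seg_coord hy
  have hxy : ∀ m, x m * y m = 0 := by
    intro m
    by_cases h1 : m = i ∨ m = j
    · have h2 : ¬ (m = p ∨ m = q) := fun h2 => by
        have : m ∈ ({i, j} : Set (Fin 5)) ∩ {p, q} := ⟨h1, h2⟩
        rw [hd] at this
        exact this
      rw [not_or] at h2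
      rw [zy m h2.1 h2.2, mul_zero]
    · rw [not_or] at h1
      rw [zx m h1.1 h1.2, zero_mul]
  by_cases hx0 : x 0 * x 1 = 0
  · by_cases hy0 : y 0 * y 1 = 0
    · rw [drawing, drawing, if_pos hx0, if_pos hy0] at h
      exact lin_ne nx ny sx sy (edge_coord hij hx) (edge_coord hpq hy) hx0 hy0 hxy h.symm
    · rw [drawing, drawing, if_pos hx0, if_neg hy0] at h
      exact arc_ne_lin k y nx sx
        ((mul_eq_zero.1 (hxy 0)).resolve_right (left_ne_zero_of_mul hy0))
        ((mul_eq_zero.1 (hxy 1)).resolve_right (right_ne_zero_of_mul hy0)) h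
  · have y0 := (mul_eq_zero.1 (hxy 0)).resolve_left (left_ne_zero_of_mul hx0)
    have y1 := (mul_eq_zero.1 (hxy 1)).resolve_left (right_ne_zero_of_mul hx0)
    have hy0 : y 0 * y 1 = 0 := by rw [y0, zero_mul]
    rw [drawing, drawing, if_neg hx0, if_pos hy0] at h
    exact arc_ne_lin k x ny sy y0 y1 h.symm

/-! ### The winding number of the triangle -/

/-- `i` times the path from `3` through `-i` to `-3` that closes up the triangle, for
`1/3 ≤ t ≤ 1`. The factor `i` moves the path off the branch cut of the logarithm. -/
def lowerPath (t : ℝ) : ℂ :=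
  ((min (3 * t - 1) (3 - 3 * t) : ℝ) : ℂ) + ((3 * (2 - 3 * t) : ℝ) : ℂ) * Complex.I

lemma lowerPath_mem_slitPlane {t : ℝ} (h : t ∈ Icc (1 / 3 : ℝ) 1) :
    lowerPath t ∈ Complex.slitPlane := by
  have hre : (lowerPath t).re = min (3 * t - 1) (3 - 3 * t) := by simp [lowerPath]
  have him : (lowerPath t).im = 3 * (2 - 3 * t) := by
    simp only [lowerPath, Complex.add_im, Complex.ofReal_im, Complex.im_ofReal_mul, Complex.I_im,
      mul_one, zero_add]
  rw [Complex.mem_slitPlane_iff, hre, him]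
  by_cases h2 : t = 2 / 3
  · left
    subst h2
    norm_num
  · right
    intro h3
    apply h2
    linarith

lemma drawing_triLoop_upper (k : ℤ) {t : ℝ} (h : t ≤ 1 / 3) :
    drawing k (triLoop t)
      = 3 * Complex.exp (((-((2 * k + 1) * Real.pi * (1 - 3 * t)) : ℝ) : ℂ) * Complex.I) := by
  have h' : triLoop t = (1 - 3 * t) • vert 0 + (3 * t) • vert 1 := if_pos h
  rw [drawing_eq_arc, arcMap, h'] <;> simp [h', vert]

lemma drawing_triLoop_lower (k : ℤ) {t : ℝ} (h : ¬ t ≤ 1 / 3) :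
    drawing k (triLoop t) = -Complex.I * lowerPath t := by
  have h0 : triLoop t 0 * triLoop t 1 = 0 := by
    rw [triLoop, if_neg h]
    split_ifs <;> simp [vert]
  rw [drawing, if_pos h0, triLoop, if_neg h]
  have hI := Complex.I_sq
  split_ifs with h2
  · rw [lowerPath, min_eq_left (by linarith)]
    simp [linMap, vert]
    linear_combination (3 * (2 - 3 * (t : ℂ))) * hI
  · rw [lowerPath, min_eq_right (by linarith)]
    simp [linMap, vert]
    linear_combination (3 * (2 - 3 * (t : ℂ))) * hI

open Classical in
/-- A continuous logarithm of the image of the triangle. -/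
def logLift (k : ℤ) (t : ℝ) : ℂ :=
  if t ≤ 1 / 3 then
    (Real.log 3 : ℂ) + ((-((2 * k + 1) * Real.pi * (1 - 3 * t)) : ℝ) : ℂ) * Complex.I
  else Complex.log (lowerPath t) - Real.pi / 2 * Complex.I

lemma log_lowerPath_start : Complex.log (lowerPath (1 / 3)) - Real.pi / 2 * Complex.I
    = (Real.log 3 : ℂ) := by
  have h : lowerPath (1 / 3) = ((3 : ℝ) : ℂ) * Complex.I := by
    rw [lowerPath]
    norm_num
  rw [h, Complex.log_ofReal_mul (by norm_num) Complex.I_ne_zero, Complex.log_I]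
  ring

lemma log_lowerPath_end : Complex.log (lowerPath 1) - Real.pi / 2 * Complex.I
    = (Real.log 3 : ℂ) - Real.pi * Complex.I := by
  have h : lowerPath 1 = ((3 : ℝ) : ℂ) * (-Complex.I) := by
    rw [lowerPath]
    norm_num
  rw [h, Complex.log_ofReal_mul (by norm_num) (neg_ne_zero.2 Complex.I_ne_zero), Complex.log_neg_I]
  ring

lemma continuousOn_logLift (k : ℤ) : ContinuousOn (logLift k) (Icc 0 1) := by
  rw [← Icc_union_Icc_eq_Icc (b := (1 / 3 : ℝ)) (by norm_num) (by norm_num)]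
  refine ContinuousOn.union_of_isClosed ?_ ?_ isClosed_Icc isClosed_Icc
  · refine ContinuousOn.congr (f := fun t : ℝ => (Real.log 3 : ℂ) +
      ((-((2 * k + 1) * Real.pi * (1 - 3 * t)) : ℝ) : ℂ) * Complex.I) ?_ fun t ht => if_pos ht.2
    fun_prop
  · refine ContinuousOn.congr
      (f := fun t : ℝ => Complex.log (lowerPath t) - Real.pi / 2 * Complex.I) ?_ fun t ht => ?_
    · have hc : Continuous lowerPath := by
        unfold lowerPath
        fun_prop
      exact (hc.continuousOn.clog fun t ht => lowerPath_mem_slitPlane ht).sub continuousOn_const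
    · by_cases h : t ≤ 1 / 3
      · obtain rfl : t = 1 / 3 := le_antisymm h ht.1
        simp only [log_lowerPath_start, logLift, if_pos h]
        norm_num
      · exact if_neg h

lemma exp_logLift (k : ℤ) {t : ℝ} (ht : t ∈ Icc (0 : ℝ) 1) :
    drawing k (triLoop t) = Complex.exp (logLift k t) := by
  by_cases h : t ≤ 1 / 3
  · rw [drawing_triLoop_upper k h, logLift, if_pos h, Complex.exp_add, ← Complex.ofReal_exp,
      Real.exp_log (by norm_num)]
    norm_num
  · have hm : lowerPath t ∈ Complex.slitPlane := lowerPath_mem_slitPlane ⟨by linarith, ht.2⟩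
    have hI : Complex.exp (-(Real.pi / 2 * Complex.I)) = -Complex.I := by
      rw [Complex.exp_neg, Complex.exp_pi_div_two_mul_I, Complex.inv_I]
    rw [drawing_triLoop_lower k h, logLift, if_neg h, sub_eq_add_neg, Complex.exp_add,
      Complex.exp_log (Complex.slitPlane_ne_zero hm), hI, mul_comm]

lemma drawing_vert_three (k : ℤ) : drawing k (vert 3) = 0 := by
  simp [drawing, linMap, vert]

/-- For any integer `k` there exists a continuous almost embedding
`g : K₅ − (4,5) → ℝ²` such that `w(g|K₃, g4) = k`. -/
theorem exists_almostEmb_winding_eq (k : ℤ) :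
    ∃ g : (Fin 5 → ℝ) → ℂ, AlmostEmb g ∧
      IsWindingNumber (fun t => g (triLoop t)) (g (vert 3)) k := by
  refine ⟨drawing k, almostEmb_drawing k, logLift k, continuousOn_logLift k, fun t ht => ?_, ?_⟩
  · rw [drawing_vert_three, zero_add]
    exact exp_logLift k ht
  · have h1 : logLift k 1 = (Real.log 3 : ℂ) - Real.pi * Complex.I := by
      rw [logLift, if_neg (by norm_num), log_lowerPath_end]
    have h0 : logLift k 0
        = (Real.log 3 : ℂ) + ((-((2 * k + 1) * Real.pi) : ℝ) : ℂ) * Complex.I := by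
      rw [logLift, if_pos (by norm_num)]
      norm_num
    rw [h1, h0]
    push_cast
    ring
end
end

section
/- For any continuous injective closed curve γ : S¹ → ℝ² and any point A ∈ ℝ² with A ∉ γ(S¹), the winding number w(γ, A) belongs to {−1, 0, 1}. -/
/-!
Suppose the winding number `n` is not `0`, `1` or `-1`. A continuous logarithm of `γ - A`, divided
by `2πi`, extends to a continuous `k : ℝ → ℂ` with `k (t + 1) = k t + n`: a curve in the plane,
invariant under translation by `n` and staying in a horizontal strip. If `k u = k t + 1`, then `u`
and `t` parametrize the same point of the loop, so injectivity makes `u - t` an integer, whence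
`n * (u - t) = 1`, which is impossible. So it suffices to show that `k` meets its translate `k + 1`.

Let `t` run from a point where `Im k` is maximal to one where it is minimal, and let `u` run from
far on one side of the strip to far on the other. Then `k u - k t - 1` is a continuous function on a
rectangle whose real part is negative on the left side and positive on the right side, and whose
imaginary part is nonpositive on the bottom side and nonnegative on the top side, because `k` and
`k + 1` have the same heights. By the two-dimensional Poincaré–Miranda theorem
(`exists_zero_of_signs`) it has a zero. That theorem is proved by following a continuous argument
of the function around the boundary of the rectangle.
-/

open Set

noncomputable section

/-- An angle following a path cannot cross a value that it never takes. -/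
lemma lt_of_forall_ne {f : ℝ → ℝ} (hf : Continuous f) {c a b : ℝ} (ha : a ∈ Icc (0 : ℝ) 1)
    (hb : b ∈ Icc (0 : ℝ) 1) (hne : ∀ x ∈ Icc (0 : ℝ) 1, f x ≠ c) (hlt : f a < c) : f b < c := by
  by_contra! hle
  obtain ⟨x, hx, hxc⟩ := isPreconnected_Icc.intermediate_value ha hb hf.continuousOn ⟨hlt.le, hle⟩
  exact hne x hx hxc

lemma gt_of_forall_ne {f : ℝ → ℝ} (hf : Continuous f) {c a b : ℝ} (ha : a ∈ Icc (0 : ℝ) 1)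
    (hb : b ∈ Icc (0 : ℝ) 1) (hne : ∀ x ∈ Icc (0 : ℝ) 1, f x ≠ c) (hlt : c < f a) : c < f b := by
  by_contra! hle
  obtain ⟨x, hx, hxc⟩ := isPreconnected_Icc.intermediate_value hb ha hf.continuousOn ⟨hle, hlt.le⟩
  exact hne x hx hxc

/-- The Poincaré–Miranda theorem, with sign conditions on the boundary of the unit square, for a
function defined on the whole plane; the zero is not located inside the square. -/
lemma exists_zero_of_signs (F : ℝ × ℝ → ℂ) (hF : Continuous F)
    (hleft : ∀ y ∈ Icc (0 : ℝ) 1, (F (0, y)).re < 0)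
    (hright : ∀ y ∈ Icc (0 : ℝ) 1, 0 < (F (1, y)).re)
    (hbot : ∀ x ∈ Icc (0 : ℝ) 1, (F (x, 0)).im ≤ 0)
    (htop : ∀ x ∈ Icc (0 : ℝ) 1, 0 ≤ (F (x, 1)).im) : ∃ p, F p = 0 := by
  by_contra! hne
  -- The argument at the bottom left corner is taken in `(-3π/2, π/2]`, so that the interval
  -- `[-π, -π/2)` of expected values lies in the interior.
  obtain ⟨e₀, he₀, hlow, hupp⟩ : ∃ e₀ : ℂ, Complex.exp e₀ = F (0, 0) ∧
      -(3 * Real.pi / 2) < e₀.im ∧ e₀.im ≤ Real.pi / 2 := by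
    refine ⟨Complex.log (Complex.I * F (0, 0)) - (Real.pi / 2 : ℝ) * Complex.I, ?_, ?_, ?_⟩
    · rw [Complex.exp_sub, Complex.exp_log (mul_ne_zero Complex.I_ne_zero (hne _))]
      push_cast
      rw [Complex.exp_pi_div_two_mul_I]
      field_simp
    · have := Complex.neg_pi_lt_log_im (Complex.I * F (0, 0))
      rw [Complex.sub_im, Complex.im_ofReal_mul, Complex.I_im]
      linarith
    · have := Complex.log_im_le_pi (Complex.I * F (0, 0))
      rw [Complex.sub_im, Complex.im_ofReal_mul, Complex.I_im]
      linarith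
  obtain ⟨G, ⟨hG₀, hG⟩, -⟩ := Complex.isCoveringMapOn_exp.existsUnique_continuousMap_lifts
    (⟨F, hF⟩ : C(ℝ × ℝ, ℂ)) (a₀ := (0, 0)) (e₀ := e₀) he₀ (fun a => hne a)
  have hexp : ∀ p, F p = Complex.exp (G p) := fun p => (congrFun hG p).symm
  set θ : ℝ × ℝ → ℝ := fun p => (G p).im with hθ
  have hθc : Continuous θ := Complex.continuous_im.comp G.continuous
  have hre : ∀ p, (F p).re = Real.exp (G p).re * Real.cos (θ p) := fun p => by
    rw [hexp, Complex.exp_re]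
  have him : ∀ p, (F p).im = Real.exp (G p).re * Real.sin (θ p) := fun p => by
    rw [hexp, Complex.exp_im]
  have hleft' : ∀ y ∈ Icc (0 : ℝ) 1, Real.cos (θ (0, y)) < 0 := fun y hy => by
    have := hleft y hy
    rw [hre] at this
    exact neg_of_mul_neg_right this (Real.exp_pos _).le
  have hright' : ∀ y ∈ Icc (0 : ℝ) 1, 0 < Real.cos (θ (1, y)) := fun y hy => by
    have := hright y hy
    rw [hre] at this
    exact pos_of_mul_pos_right this (Real.exp_pos _).le
  have hbot' : ∀ x ∈ Icc (0 : ℝ) 1, Real.sin (θ (x, 0)) ≤ 0 := fun x hx => by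
    have := hbot x hx
    rw [him] at this
    exact nonpos_of_mul_nonpos_right this (Real.exp_pos _)
  have htop' : ∀ x ∈ Icc (0 : ℝ) 1, 0 ≤ Real.sin (θ (x, 1)) := fun x hx => by
    have := htop x hx
    rw [him] at this
    exact nonneg_of_mul_nonneg_right this (Real.exp_pos _)
  have hπ := Real.pi_pos
  have h0 : (0 : ℝ) ∈ Icc (0 : ℝ) 1 := by simp
  have h1 : (1 : ℝ) ∈ Icc (0 : ℝ) 1 := by simp
  have hx0 : Continuous fun x : ℝ => θ (x, 0) := by fun_prop
  have hx1 : Continuous fun x : ℝ => θ (x, 1) := by fun_prop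
  have hy0 : Continuous fun y : ℝ => θ (0, y) := by fun_prop
  have hy1 : Continuous fun y : ℝ => θ (1, y) := by fun_prop
  have sin3 : Real.sin (-(3 * Real.pi / 2)) = 1 := by
    rw [show -(3 * Real.pi / 2) = Real.pi / 2 - 2 * Real.pi by ring, Real.sin_sub_two_pi,
      Real.sin_pi_div_two]
  have sin3' : Real.sin (3 * Real.pi / 2) = -1 := by
    rw [show 3 * Real.pi / 2 = -(Real.pi / 2) + 2 * Real.pi by ring, Real.sin_add_two_pi,
      Real.sin_neg, Real.sin_pi_div_two]
  -- bottom left corner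
  have a1 : -(3 * Real.pi / 2) < θ (0, 0) := by simpa [hθ, hG₀] using hlow
  have a2 : θ (0, 0) < -(Real.pi / 2) := by
    by_contra! h
    have : θ (0, 0) ≤ Real.pi / 2 := by simpa [hθ, hG₀] using hupp
    linarith [hleft' 0 h0, Real.cos_nonneg_of_mem_Icc ⟨h, this⟩]
  -- bottom right corner
  have b1 : -(3 * Real.pi / 2) < θ (1, 0) :=
    gt_of_forall_ne hx0 h0 h1 (fun x hx h => by
      have := hbot' x hx
      rw [show θ (x, 0) = _ from h, sin3] at this
      linarith) a1
  have b2 : θ (1, 0) < Real.pi / 2 :=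
    lt_of_forall_ne hx0 h0 h1 (fun x hx h => by
      have := hbot' x hx
      rw [show θ (x, 0) = _ from h, Real.sin_pi_div_two] at this
      linarith) (by linarith)
  have b3 : -(Real.pi / 2) < θ (1, 0) := by
    by_contra! h
    have := Real.cos_nonpos_of_pi_div_two_le_of_le (x := -θ (1, 0)) (by linarith) (by linarith)
    rw [Real.cos_neg] at this
    linarith [hright' 0 h0]
  -- top right corner
  have c1 : -(Real.pi / 2) < θ (1, 1) :=
    gt_of_forall_ne hy1 h0 h1 (fun y hy h => by
      have := hright' y hy
      rw [show θ (1, y) = _ from h, Real.cos_neg, Real.cos_pi_div_two] at this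
      linarith) b3
  have c2 : θ (1, 1) < Real.pi / 2 :=
    lt_of_forall_ne hy1 h0 h1 (fun y hy h => by
      have := hright' y hy
      rw [show θ (1, y) = _ from h, Real.cos_pi_div_two] at this
      linarith) b2
  -- top left corner
  have d1 : -(Real.pi / 2) < θ (0, 1) :=
    gt_of_forall_ne hx1 h1 h0 (fun x hx h => by
      have := htop' x hx
      rw [show θ (x, 1) = _ from h, Real.sin_neg, Real.sin_pi_div_two] at this
      linarith) c1
  -- Back at the bottom left corner the argument exceeds `-π/2`: it has gained a full turn.
  have a3 : -(Real.pi / 2) < θ (0, 0) :=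
    gt_of_forall_ne hy0 h1 h0 (fun y hy h => by
      have := hleft' y hy
      rw [show θ (0, y) = _ from h, Real.cos_neg, Real.cos_pi_div_two] at this
      linarith) d1
  linarith

/-- A curve `k u = g (fract u) + m * u`, invariant under translation by `m ≠ 0`, meets its translate
by `1`. -/
lemma exists_eq_add_one (g : ℝ → ℂ) (hg : ContinuousOn g (Icc 0 1)) (h01 : g 0 = g 1) (m : ℤ)
    (hm : m ≠ 0) : ∃ u t : ℝ, g (Int.fract u) + m * u = g (Int.fract t) + m * t + 1 := by
  have hgc : Continuous fun u : ℝ => g (Int.fract u) := hg.comp_fract'' h01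
  have hmR : (m : ℝ) ≠ 0 := by exact_mod_cast hm
  have hfract : ∀ u : ℝ, Int.fract u ∈ Icc (0 : ℝ) 1 := fun u =>
    ⟨Int.fract_nonneg u, (Int.fract_lt_one u).le⟩
  have himc : ContinuousOn (fun t => (g t).im) (Icc 0 1) :=
    Complex.continuous_im.comp_continuousOn hg
  have hne : (Icc (0 : ℝ) 1).Nonempty := ⟨0, by simp⟩
  obtain ⟨a, ha, hamax⟩ := isCompact_Icc.exists_isMaxOn hne himc
  obtain ⟨b, hb, hbmin⟩ := isCompact_Icc.exists_isMinOn hne himc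
  obtain ⟨C, hC⟩ := isCompact_Icc.exists_bound_of_continuousOn hg
  have hval : ∀ t ∈ Icc (0 : ℝ) 1, g (Int.fract t) = g t := fun t ht => by
    rcases ht.2.lt_or_eq with h | h
    · rw [Int.fract_eq_self.2 ⟨ht.1, h⟩]
    · simp [h, h01]
  -- `M` strictly bounds the real part of `k t + 1 - g (fract u)` for `t ∈ [0, 1]` and all `u`.
  set M : ℝ := 2 * C + |(m : ℝ)| + 2 with hM
  have hreb : ∀ u : ℝ, |(g (Int.fract u)).re| ≤ C := fun u =>
    (Complex.abs_re_le_norm _).trans (hC _ (hfract u))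
  have hseg : ∀ y ∈ Icc (0 : ℝ) 1, |(m : ℝ) * ((1 - y) * a + y * b)| ≤ |(m : ℝ)| := by
    intro y hy
    rw [abs_mul]
    refine mul_le_of_le_one_right (abs_nonneg _) (abs_le.2 ⟨?_, ?_⟩)
    · nlinarith [hy.1, hy.2, ha.1, hb.1, mul_nonneg (sub_nonneg.2 hy.2) ha.1, mul_nonneg hy.1 hb.1]
    · nlinarith [mul_nonneg (sub_nonneg.2 hy.2) (sub_nonneg.2 ha.2),
        mul_nonneg hy.1 (sub_nonneg.2 hb.2)]
  -- The coordinate `x` is rescaled by `1 / m`, so that `k` moves to the right for either sign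
  -- of `m`.
  obtain ⟨⟨x, y⟩, hxy⟩ := exists_zero_of_signs
    (fun p => (g (Int.fract (M * (2 * p.1 - 1) / m)) + ((M * (2 * p.1 - 1) : ℝ) : ℂ)) -
      (g (Int.fract ((1 - p.2) * a + p.2 * b)) +
        ((m * ((1 - p.2) * a + p.2 * b) : ℝ) : ℂ)) - 1)
    (by
      have e1 : Continuous fun p : ℝ × ℝ => g (Int.fract (M * (2 * p.1 - 1) / m)) :=
        hgc.comp (by fun_prop : Continuous fun p : ℝ × ℝ => M * (2 * p.1 - 1) / m)
      have e2 : Continuous fun p : ℝ × ℝ => g (Int.fract ((1 - p.2) * a + p.2 * b)) :=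
        hgc.comp (by fun_prop : Continuous fun p : ℝ × ℝ => (1 - p.2) * a + p.2 * b)
      have e3 : Continuous fun p : ℝ × ℝ => ((M * (2 * p.1 - 1) : ℝ) : ℂ) :=
        Complex.continuous_ofReal.comp (by fun_prop)
      have e4 : Continuous fun p : ℝ × ℝ => ((m * ((1 - p.2) * a + p.2 * b) : ℝ) : ℂ) :=
        Complex.continuous_ofReal.comp (by fun_prop)
      exact ((e1.add e3).sub (e2.add e4)).sub continuous_const)
    (by
      intro y hy
      simp only [Complex.sub_re, Complex.add_re, Complex.ofReal_re, Complex.one_re]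
      have h1 := abs_le.1 (hreb (M * (2 * 0 - 1) / m))
      have h2 := abs_le.1 (hreb ((1 - y) * a + y * b))
      have h3 := abs_le.1 (hseg y hy)
      linarith)
    (by
      intro y hy
      simp only [Complex.sub_re, Complex.add_re, Complex.ofReal_re, Complex.one_re]
      have h1 := abs_le.1 (hreb (M * (2 * 1 - 1) / m))
      have h2 := abs_le.1 (hreb ((1 - y) * a + y * b))
      have h3 := abs_le.1 (hseg y hy)
      linarith)
    (by
      intro x _
      simp only [Complex.sub_im, Complex.add_im, Complex.ofReal_im, Complex.one_im]
      have h1 : (g (Int.fract (M * (2 * x - 1) / m))).im ≤ (g a).im := hamax (hfract _)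
      rw [show (1 - (0 : ℝ)) * a + 0 * b = a by ring, hval a ha]
      linarith)
    (by
      intro x _
      simp only [Complex.sub_im, Complex.add_im, Complex.ofReal_im, Complex.one_im]
      have h1 : (g b).im ≤ (g (Int.fract (M * (2 * x - 1) / m))).im := hbmin (hfract _)
      rw [show (1 - (1 : ℝ)) * a + 1 * b = b by ring, hval b hb]
      linarith)
  refine ⟨M * (2 * x - 1) / m, (1 - y) * a + y * b, ?_⟩
  have hmC : (m : ℂ) ≠ 0 := by exact_mod_cast hm
  have hscale : (m : ℂ) * ((M * (2 * x - 1) / m : ℝ) : ℂ) = ((M * (2 * x - 1) : ℝ) : ℂ) := by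
    push_cast
    field_simp
  rw [hscale]
  push_cast at hxy ⊢
  linear_combination hxy

/-- For any continuous injective closed curve `γ : S¹ → ℝ²` and any point
`A ∈ ℝ²` not on the curve, the winding number `w(γ, A)` is `−1`, `0` or `1`.
The curve `S¹ → ℂ` is converted to a loop on `[0,1]` via `t ↦ exp(2πit)`. -/
theorem winding_of_injective_loop_mem (γ : Circle → ℂ) (hcont : Continuous γ)
    (hinj : Function.Injective γ) (A : ℂ) (hA : A ∉ Set.range γ)
    (n : ℤ)
    (hn : IsWindingNumber (fun t => γ (Circle.exp (2 * Real.pi * t))) A n) :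
    n = -1 ∨ n = 0 ∨ n = 1 := by
  obtain ⟨h, hc, hγ, hdiff⟩ := hn
  rcases eq_or_ne n 0 with hn0 | hn0
  · exact Or.inr (Or.inl hn0)
  have h2 : (2 * Real.pi * Complex.I : ℂ) ≠ 0 := Complex.two_pi_I_ne_zero
  obtain ⟨u, t, hut⟩ := exists_eq_add_one
    (fun t => h t / (2 * Real.pi * Complex.I) - n * t)
    ((hc.div_const _).sub (by fun_prop))
    (by
      have : h 1 = h 0 + 2 * Real.pi * Complex.I * n := by linear_combination hdiff
      rw [this]
      push_cast
      field_simp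
      ring) n hn0
  have hper : ∀ u : ℝ, Circle.exp (2 * Real.pi * u) = Circle.exp (2 * Real.pi * Int.fract u) := by
    intro u
    rw [Circle.exp_eq_exp]
    exact ⟨⌊u⌋, by linear_combination (2 * Real.pi) * (Int.fract_add_floor u).symm⟩
  have hmem : ∀ u : ℝ, Int.fract u ∈ Icc (0 : ℝ) 1 := fun u =>
    ⟨Int.fract_nonneg u, (Int.fract_lt_one u).le⟩
  have hfl : ∀ u : ℝ, (u : ℂ) = ((Int.fract u : ℝ) : ℂ) + (⌊u⌋ : ℂ) := fun u => by
    exact_mod_cast (Int.fract_add_floor u).symm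
  have hlog : h (Int.fract u) = h (Int.fract t) +
      ((n * ⌊t⌋ - n * ⌊u⌋ + 1 : ℤ) : ℂ) * (2 * Real.pi * Complex.I) := by
    simp only [hfl u, hfl t] at hut
    field_simp at hut
    push_cast
    linear_combination hut
  have heq : γ (Circle.exp (2 * Real.pi * u)) = γ (Circle.exp (2 * Real.pi * t)) := by
    rw [hper u, hper t, show γ _ = _ from hγ _ (hmem u), show γ _ = _ from hγ _ (hmem t),
      Complex.exp_eq_exp_iff_exists_int.2 ⟨_, hlog⟩]
  obtain ⟨j, hj⟩ := Circle.exp_eq_exp.1 (hinj heq)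
  have huj : u = t + j := by
    have := Real.pi_pos
    have h3 : 2 * Real.pi * (u - t - j) = 0 := by linear_combination hj
    have := (mul_eq_zero.1 h3).resolve_left (by positivity)
    linarith
  have hnj : n * j = 1 := by
    rw [huj, Int.fract_add_intCast] at hut
    have : (n : ℂ) * j = 1 := by
      push_cast at hut
      linear_combination hut
    exact_mod_cast this
  rcases Int.eq_one_or_neg_one_of_mul_eq_one hnj with h | h
  · exact Or.inr (Or.inr h)
  · exact Or.inl h
end
end

section
/- In the plane let A₁, A₂, A₃ be the vertices of a regular triangle and O its center. For each m ∈ {1,2,3} let L_m be a polygonal line (piecewise linear path) joining the two vertices distinct from A_m and disjoint from the closed ray from O through A_m. Then the closed curve L₁ ∪ L₂ ∪ L₃, obtained by traversing L₃ from A₁ to A₂, then L₁ from A₂ to A₃, then L₂ from A₃ to A₁, satisfies w(L₁ ∪ L₂ ∪ L₃, O) = ±1. -/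
/-!
Subtract the centre, so that the vertices become `C`, `zC`, `z²C` with `z = exp (± 2πi/3)`
(`triangle_ratio`). The line `L_m` avoids the closed ray through the vertex `A_m`, so on that third
of the loop the branch of the logarithm cut along this ray is defined. Any continuous logarithm `h`
differs from it by a continuous function with values in `2πiℤ`, hence by a constant
(`log_increment`), and so the increment of `h` depends only on the endpoints: it is `± 2πi/3`, with
the same sign on all three thirds (`third_increment`). The total increment is thus `± 2πi`.
-/

open Set

noncomputable section

/-- `f : ℝ → ℂ` is affine on `[a, b]`. -/
def AffOn (f : ℝ → ℂ) (a b : ℝ) : Prop := ∃ c d : ℂ, ∀ t ∈ Icc a b, f t = c + t * d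

/-- `f` restricted to `[0,1]` is a polygonal line (piecewise linear path):
there is a subdivision `0 = s 0 < s 1 < ⋯ < s n = 1` of `[0,1]` such that `f`
is affine on each part. -/
def PLOn (f : ℝ → ℂ) : Prop :=
  ∃ n : ℕ, ∃ s : Fin (n+1) → ℝ, StrictMono s ∧ s 0 = 0 ∧ s (Fin.last n) = 1 ∧
    ∀ k : Fin n, AffOn f (s k.castSucc) (s k.succ)

/-- The closed curve obtained by traversing `L₃` (from `A₁` to `A₂`), then `L₁`
(from `A₂` to `A₃`), then `L₂` (from `A₃` to `A₁`); indices are 0-based, so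
`L (m-1)` is the line `L_m`. -/
def concatLoop (L : Fin 3 → ℝ → ℂ) (t : ℝ) : ℂ :=
  if t ≤ 1/3 then L 2 (3*t) else if t ≤ 2/3 then L 0 (3*t - 1) else L 1 (3*t - 2)

/-- `A 0, A 1, A 2` are the vertices of a regular (equilateral, nondegenerate)
triangle. -/
def IsRegularTriangle (A : Fin 3 → ℂ) : Prop :=
  A 0 ≠ A 1 ∧ dist (A 0) (A 1) = dist (A 1) (A 2) ∧ dist (A 1) (A 2) = dist (A 2) (A 0)

/-- A continuous function on an interval with values in `2πiℤ` takes equal values at the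
endpoints. -/
lemma eq_of_exp_eq_one {f : ℝ → ℂ} {a b : ℝ} (hab : a ≤ b) (hf : ContinuousOn f (Icc a b))
    (h1 : ∀ t ∈ Icc a b, Complex.exp (f t) = 1) : f b = f a := by
  have h2 : ∀ t : ℝ, ∃ k : ℤ, t ∈ Icc a b → f t = k * (2 * Real.pi * Complex.I) := by
    intro t
    by_cases ht : t ∈ Icc a b
    · obtain ⟨k, hk⟩ := Complex.exp_eq_one_iff.1 (h1 t ht)
      exact ⟨k, fun _ => hk⟩
    · exact ⟨0, fun h => absurd h ht⟩
  choose k hk using h2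
  have hkc : ContinuousOn k (Icc a b) := by
    rw [Int.isClosedEmbedding_coe_real.isInducing.continuousOn_iff]
    have : ContinuousOn (fun t => (f t).im / (2 * Real.pi)) (Icc a b) :=
      (Complex.continuous_im.comp_continuousOn hf).div_const _
    refine this.congr fun t ht => ?_
    have hpi := Real.pi_pos
    simp only [Function.comp_apply, hk t ht]
    have : ((k t : ℂ) * (2 * Real.pi * Complex.I)).im = k t * (2 * Real.pi) := by simp
    rw [this]
    field_simp
  have := isPreconnected_Icc.constant hkc (right_mem_Icc.2 hab) (left_mem_Icc.2 hab)
  rw [hk b (right_mem_Icc.2 hab), hk a (left_mem_Icc.2 hab), this]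

/-- If `exp ∘ h` avoids the closed ray through `C`, the increment of `h` is that of the branch
`w ↦ log (-w / C)`, which is cut along this ray. -/
lemma log_increment {h : ℝ → ℂ} {a b : ℝ} (hab : a ≤ b) (hc : ContinuousOn h (Icc a b))
    {C : ℂ} (hC : C ≠ 0)
    (hr : ∀ t ∈ Icc a b, ∀ s : ℝ, 0 ≤ s → Complex.exp (h t) ≠ s • C) :
    h b - h a = Complex.log (-Complex.exp (h b) / C) - Complex.log (-Complex.exp (h a) / C) := by
  have hs : ∀ t ∈ Icc a b, -Complex.exp (h t) / C ∈ Complex.slitPlane := by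
    intro t ht
    by_contra hcon
    rw [Complex.mem_slitPlane_iff, not_or, not_lt, not_not] at hcon
    refine hr t ht (-(-Complex.exp (h t) / C).re) (by linarith [hcon.1]) ?_
    have : -Complex.exp (h t) / C = ((-Complex.exp (h t) / C).re : ℝ) := by
      apply Complex.ext <;> simp [hcon.2]
    rw [div_eq_iff hC] at this
    rw [Complex.real_smul, Complex.ofReal_neg, neg_mul, ← this, neg_neg]
  -- `h` and the branch `log (-exp h / C)` differ by a logarithm of `-C` modulo `2πiℤ`.
  have key := eq_of_exp_eq_one (f := fun t => h t - Complex.log (-Complex.exp (h t) / C)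
    - Complex.log (-C)) hab ?_ ?_
  · linear_combination key
  · refine (hc.sub (ContinuousOn.clog ?_ hs)).sub continuousOn_const
    exact (Complex.continuous_exp.comp_continuousOn hc).neg.div_const _
  · intro t ht
    have h0 := Complex.slitPlane_ne_zero (hs t ht)
    have h1 := Complex.exp_ne_zero (h t)
    rw [Complex.exp_sub, Complex.exp_sub, Complex.exp_log h0, Complex.exp_log (neg_ne_zero.2 hC)]
    field_simp

/-- A logarithm of a path from `zC` to `z²C` avoiding the closed ray through `C`, where
`z = exp (2πiε/3)` is a primitive cube root of unity, has increment `2πiε/3`. -/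
lemma third_increment {h : ℝ → ℂ} {a b : ℝ} (hab : a ≤ b) (hc : ContinuousOn h (Icc a b))
    {C z : ℂ} (hC : C ≠ 0)
    (hr : ∀ t ∈ Icc a b, ∀ s : ℝ, 0 ≤ s → Complex.exp (h t) ≠ s • C)
    {ε : ℝ} (hε : ε = 1 ∨ ε = -1)
    (hz1 : -z = Complex.exp ((-(ε * (Real.pi / 3)) : ℝ) * Complex.I))
    (hz2 : -z ^ 2 = Complex.exp ((ε * (Real.pi / 3) : ℝ) * Complex.I))
    (ha : Complex.exp (h a) = z * C) (hb : Complex.exp (h b) = z ^ 2 * C) :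
    h b - h a = ε * (2 * Real.pi / 3) * Complex.I := by
  have hpi := Real.pi_pos
  rw [log_increment hab hc hC hr, ha, hb, ← neg_mul, ← neg_mul, mul_div_cancel_right₀ _ hC,
    mul_div_cancel_right₀ _ hC, hz1, hz2, Complex.log_exp, Complex.log_exp]
  · push_cast
    ring
  all_goals
    rw [Complex.im_ofReal_mul, Complex.I_im]
    rcases hε with rfl | rfl <;> linarith

/-- The rotation `z` by `± 2π/3` about the centre permutes the vertices cyclically; `-z` and `-z²`
are written with their arguments in `(-π, π]`. -/
lemma triangle_ratio {A : Fin 3 → ℂ} {O : ℂ} (hreg : IsRegularTriangle A)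
    (hO : O = (A 0 + A 1 + A 2) / 3) :
    ∃ z : ℂ, ∃ ε : ℝ, (ε = 1 ∨ ε = -1) ∧ z ^ 3 = 1 ∧ A 0 - O ≠ 0 ∧
      A 1 - O = z * (A 0 - O) ∧ A 2 - O = z ^ 2 * (A 0 - O) ∧
      -z = Complex.exp ((-(ε * (Real.pi / 3)) : ℝ) * Complex.I) ∧
      -z ^ 2 = Complex.exp ((ε * (Real.pi / 3) : ℝ) * Complex.I) := by
  obtain ⟨h0, h1, h2⟩ := hreg
  have hp : A 1 - A 0 ≠ 0 := sub_ne_zero.2 h0.symm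
  have hn : ‖A 1 - A 0‖ ≠ 0 := norm_ne_zero_iff.2 hp
  obtain ⟨z, hz⟩ : ∃ z, z = (A 2 - A 1) / (A 1 - A 0) := ⟨_, rfl⟩
  have hq : A 2 - A 1 = z * (A 1 - A 0) := by rw [hz, div_mul_cancel₀ _ hp]
  rw [dist_comm (A 0), dist_comm (A 1) (A 2), dist_eq_norm, dist_eq_norm] at h1
  rw [dist_comm (A 1), dist_eq_norm, dist_eq_norm] at h2
  have n1 : ‖z‖ = 1 := by rw [hz, norm_div, ← h1, div_self hn]
  have n2 : ‖1 + z‖ = 1 := by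
    have : 1 + z = (A 2 - A 0) / (A 1 - A 0) := by
      rw [eq_div_iff hp]; linear_combination -hq
    rw [this, norm_div, ← h2, ← h1, div_self hn]
  have s1 : z.re * z.re + z.im * z.im = 1 := by
    rw [← Complex.normSq_apply, Complex.normSq_eq_norm_sq, n1]; norm_num
  have s2 : (1 + z.re) * (1 + z.re) + z.im * z.im = 1 := by
    have := Complex.normSq_apply (1 + z)
    rw [Complex.normSq_eq_norm_sq, n2] at this
    simp at this
    linarith
  have hre : z.re = -1 / 2 := by linarith
  -- `|z| = |1 + z| = 1` forces `z` to be a primitive cube root of unity.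
  have hzz : z ^ 2 + z + 1 = 0 := by
    apply Complex.ext <;> simp [pow_two]
    · linear_combination -s1 + (2 * z.re) * hre
    · linear_combination 2 * z.im * hre
  have h3 : (√3 : ℝ) * √3 = 3 := Real.mul_self_sqrt (by norm_num)
  have him : ∃ ε : ℝ, (ε = 1 ∨ ε = -1) ∧ z.im = ε * (√3 / 2) := by
    have : (z.im - √3 / 2) * (z.im + √3 / 2) = 0 := by
      rw [hre] at s1; linarith
    rcases mul_eq_zero.1 this with h | h
    · exact ⟨1, Or.inl rfl, by linarith⟩
    · exact ⟨-1, Or.inr rfl, by linarith⟩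
  obtain ⟨ε, hε, him⟩ := him
  have hcos : Real.cos (ε * (Real.pi / 3)) = 1 / 2 := by
    rcases hε with rfl | rfl <;> simp
  have hsin : Real.sin (ε * (Real.pi / 3)) = ε * (√3 / 2) := by
    rcases hε with rfl | rfl <;> simp
  have e0 : A 0 - O = -(A 1 - A 0) * (2 + z) / 3 := by
    rw [hO]; linear_combination -hq / 3
  have e1 : A 1 - O = (A 1 - A 0) * (1 - z) / 3 := by
    rw [hO]; linear_combination -hq / 3
  have e2 : A 2 - O = (A 1 - A 0) * (1 + 2 * z) / 3 := by
    rw [hO]; linear_combination 2 * hq / 3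
  have hz1 : -z = Complex.exp ((-(ε * (Real.pi / 3)) : ℝ) * Complex.I) := by
    apply Complex.ext
    · rw [Complex.exp_ofReal_mul_I_re, Real.cos_neg, hcos, Complex.neg_re, hre]; norm_num
    · rw [Complex.exp_ofReal_mul_I_im, Real.sin_neg, hsin, Complex.neg_im, him]
  have hz2 : -z ^ 2 = Complex.exp ((ε * (Real.pi / 3) : ℝ) * Complex.I) := by
    have : -z ^ 2 = 1 + z := by linear_combination -hzz
    rw [this]
    apply Complex.ext
    · rw [Complex.exp_ofReal_mul_I_re, hcos, Complex.add_re, hre]; norm_num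
    · rw [Complex.exp_ofReal_mul_I_im, hsin, Complex.add_im, him]; simp
  refine ⟨z, ε, hε, by linear_combination (z - 1) * hzz, ?_, ?_, ?_, hz1, hz2⟩
  · rw [e0]
    have : (2 + z) ≠ 0 := by
      intro h
      have := congrArg Complex.re h
      rw [Complex.add_re, hre] at this
      norm_num at this
    exact div_ne_zero (mul_ne_zero (neg_ne_zero.2 hp) this) (by norm_num)
  · rw [e0, e1]; linear_combination (A 1 - A 0) / 3 * hzz
  · rw [e0, e2]; linear_combination (A 1 - A 0) / 3 * (z + 1) * hzz

/-- Let `A₁ A₂ A₃` be a regular triangle with center `O`. For each `m`, let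
`L_m` be a polygonal line joining the two vertices distinct from `A_m` and
disjoint from the closed ray from `O` through `A_m`. Then
`w(L₁ ∪ L₂ ∪ L₃, O) = ±1`, where the closed curve `L₁ ∪ L₂ ∪ L₃` traverses
`L₃` from `A₁` to `A₂`, then `L₁` from `A₂` to `A₃`, then `L₂` from `A₃` to `A₁`. -/
theorem winding_of_three_lines (A : Fin 3 → ℂ) (O : ℂ)
    (hreg : IsRegularTriangle A) (hO : O = (A 0 + A 1 + A 2) / 3)
    (L : Fin 3 → ℝ → ℂ) (hPL : ∀ m, PLOn (L m))
    (hL2 : L 2 0 = A 0 ∧ L 2 1 = A 1)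
    (hL0 : L 0 0 = A 1 ∧ L 0 1 = A 2)
    (hL1 : L 1 0 = A 2 ∧ L 1 1 = A 0)
    (hray : ∀ m : Fin 3, ∀ t ∈ Icc (0:ℝ) 1, ∀ s : ℝ, 0 ≤ s →
      L m t ≠ O + s • (A m - O))
    (n : ℤ) (hn : IsWindingNumber (concatLoop L) O n) :
    n = 1 ∨ n = -1 := by
  obtain ⟨z, ε, hε, hz3, hB, hB1, hB2, hz1, hz2⟩ := triangle_ratio hreg hO
  obtain ⟨h, hc, hγ, hinc⟩ := hn
  have hz0 : z ≠ 0 := fun hz => by simp [hz] at hz3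
  have hpi : (Real.pi : ℂ) ≠ 0 := Complex.ofReal_ne_zero.2 Real.pi_ne_zero
  have g2 : ∀ t ∈ Icc (0:ℝ) (1/3), L 2 (3*t) = O + Complex.exp (h t) := by
    intro t ht
    rw [← hγ t ⟨ht.1, by linarith [ht.2]⟩, concatLoop, if_pos ht.2]
  have g0 : ∀ t ∈ Icc (1/3:ℝ) (2/3), L 0 (3*t-1) = O + Complex.exp (h t) := by
    intro t ht
    rw [← hγ t ⟨by linarith [ht.1], by linarith [ht.2]⟩, concatLoop]
    rcases ht.1.eq_or_lt with rfl | hlt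
    · norm_num [hL0.1, hL2.2]
    · rw [if_neg (not_le.2 hlt), if_pos ht.2]
  have g1 : ∀ t ∈ Icc (2/3:ℝ) 1, L 1 (3*t-2) = O + Complex.exp (h t) := by
    intro t ht
    rw [← hγ t ⟨by linarith [ht.1], ht.2⟩, concatLoop]
    rcases ht.1.eq_or_lt with rfl | hlt
    · norm_num [hL1.1, hL0.2]
    · rw [if_neg (by linarith), if_neg (not_le.2 hlt)]
  have v0 : Complex.exp (h 0) = A 0 - O := by
    have := g2 0 (by norm_num)
    norm_num [hL2.1] at this
    rw [this]; ring
  have v1 : Complex.exp (h (1/3)) = A 1 - O := by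
    have := g2 (1/3) (by norm_num)
    norm_num [hL2.2] at this
    rw [this]; norm_num
  have v2 : Complex.exp (h (2/3)) = A 2 - O := by
    have := g0 (2/3) (by norm_num)
    norm_num [hL0.2] at this
    rw [this]; norm_num
  have v3 : Complex.exp (h 1) = A 0 - O := by
    have := g1 1 (by norm_num)
    norm_num [hL1.2] at this
    rw [this]; ring
  have i2 : h (1/3) - h 0 = ε * (2 * Real.pi / 3) * Complex.I := by
    refine third_increment (by norm_num) (hc.mono (Icc_subset_Icc (by norm_num) (by norm_num)))
      (C := A 2 - O) (z := z) (by rw [hB2]; exact mul_ne_zero (pow_ne_zero 2 hz0) hB) ?_ hε hz1 hz2 ?_ ?_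
    · intro t ht s hs heq
      exact hray 2 (3*t) ⟨by linarith [ht.1], by linarith [ht.2]⟩ s hs (by rw [g2 t ht, heq])
    · rw [v0, hB2]; linear_combination -(A 0 - O) * hz3
    · rw [v1, hB1, hB2]; linear_combination -z * (A 0 - O) * hz3
  have i0 : h (2/3) - h (1/3) = ε * (2 * Real.pi / 3) * Complex.I := by
    refine third_increment (by norm_num) (hc.mono (Icc_subset_Icc (by norm_num) (by norm_num)))
      (C := A 0 - O) (z := z) hB ?_ hε hz1 hz2 (by rw [v1, hB1]) (by rw [v2, hB2])
    intro t ht s hs heq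
    exact hray 0 (3*t-1) ⟨by linarith [ht.1], by linarith [ht.2]⟩ s hs (by rw [g0 t ht, heq])
  have i1 : h 1 - h (2/3) = ε * (2 * Real.pi / 3) * Complex.I := by
    refine third_increment (by norm_num) (hc.mono (Icc_subset_Icc (by norm_num) (by norm_num)))
      (C := A 1 - O) (z := z) (by rw [hB1]; exact mul_ne_zero hz0 hB) ?_ hε hz1 hz2 ?_ ?_
    · intro t ht s hs heq
      exact hray 1 (3*t-2) ⟨by linarith [ht.1], by linarith [ht.2]⟩ s hs (by rw [g1 t ht, heq])
    · rw [v2, hB1, hB2]; ring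
    · rw [v3, hB1]; linear_combination -(A 0 - O) * hz3
  have hnε : (n : ℂ) = ε := by
    have h2 : 2 * (Real.pi : ℂ) * Complex.I ≠ 0 :=
      mul_ne_zero (mul_ne_zero two_ne_zero hpi) Complex.I_ne_zero
    apply mul_left_cancel₀ h2
    linear_combination -hinc + i0 + i1 + i2
  have hnε' : (n : ℝ) = ε := by exact_mod_cast hnε
  rcases hε with rfl | rfl
  · left; exact_mod_cast hnε'
  · right; exact_mod_cast hnε'
end
end

section
/- Let a₁, a₂, a₃ be pairwise distinct points on the circle S¹, and for each m ∈ {1,2,3} let L_m be the closed arc of S¹ whose endpoints are the two points distinct from a_m and which does not contain a_m. Let g : S¹ → S¹ be a continuous map such that g(a_m) = a_m and a_m ∉ g(L_m) for each m ∈ {1,2,3}. Then the degree of g equals 1. -/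
/-!
Fixing `a_m` means that `G t_m - t_m` is an integer. On each arc `L_m`, lifted to an interval inside
`(c, c + 1)` with `cexp c = a_m`, the lift `G` avoids `c + ℤ`, so by the intermediate value theorem
it stays in a single translate `(c + k, c + k + 1)`; hence the integer `G t - t` is the same at both
endpoints (`shift_eq_of_avoids`). Chaining the three arcs around the circle gives
`G (t₁ + 1) = G t₁ + 1`. Finally `G (t + 1) - G t` is continuous and integer-valued, hence constant.
-/

open Set

noncomputable section

/-- The covering map `ℝ → S¹`, `t ↦ exp(2πit)`. -/
def cexp (t : ℝ) : Circle := Circle.exp (2 * Real.pi * t)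

lemma cexp_eq_iff {x y : ℝ} : cexp x = cexp y ↔ ∃ n : ℤ, x = y + n := by
  unfold cexp
  rw [Circle.exp_eq_exp]
  refine exists_congr fun n => ?_
  have hpi : (2 * Real.pi) ≠ 0 := by positivity
  rw [show 2 * Real.pi * y + n * (2 * Real.pi) = 2 * Real.pi * (y + n) by ring]
  exact mul_right_inj' hpi

/-- If `G` sends the endpoints of `[s, t] ⊆ (c, c + 1)` to translates of themselves by integers and
its projection to the circle avoids `cexp c` on `[s, t]`, then the two integers agree. -/
lemma shift_eq_of_avoids {G : ℝ → ℝ} (hG : Continuous G) {s t c : ℝ} {m n : ℤ}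
    (hcs : c < s) (hst : s ≤ t) (htc : t < c + 1)
    (hs : G s = s + m) (ht : G t = t + n)
    (havoid : ∀ x ∈ Icc s t, cexp (G x) ≠ cexp c) : m = n := by
  have key : ∀ x ∈ Icc s t, ∀ j : ℤ, G x ≠ c + j := fun x hx j h =>
    havoid x hx (cexp_eq_iff.2 ⟨j, h⟩)
  rcases lt_trichotomy m n with h | h | h
  · have h' : (m : ℝ) + 1 ≤ n := by exact_mod_cast h
    obtain ⟨x, hx, hxe⟩ := intermediate_value_Icc hst hG.continuousOn
      (show c + ((m + 1 : ℤ) : ℝ) ∈ Icc (G s) (G t) by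
        push_cast; constructor <;> linarith)
    exact absurd hxe (key x hx _)
  · exact h
  · have h' : (n : ℝ) + 1 ≤ m := by exact_mod_cast h
    obtain ⟨x, hx, hxe⟩ := intermediate_value_Icc' hst hG.continuousOn
      (show c + ((n + 1 : ℤ) : ℝ) ∈ Icc (G t) (G s) by
        push_cast; constructor <;> linarith)
    exact absurd hxe (key x hx _)

lemma eq_of_continuous_of_integer {h : ℝ → ℝ} (hc : Continuous h)
    (hi : ∀ t, ∃ n : ℤ, h t = n) (s t : ℝ) : h s = h t := by
  choose n hn using hi
  obtain rfl : h = fun t => (n t : ℝ) := funext hn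
  have hcn : Continuous n :=
    Int.isClosedEmbedding_coe_real.isInducing.continuous_iff.2 hc
  exact congrArg _ (PreconnectedSpace.constant inferInstance hcn)

/-- Let `a₁ = cexp t₁`, `a₂ = cexp t₂`, `a₃ = cexp t₃` be pairwise distinct points
on `S¹` (every triple of pairwise distinct points is of this form for some reals
`t₁ < t₂ < t₃ < t₁ + 1`, after a relabeling that leaves the hypotheses invariant).
For each `m`, `L_m` is the closed arc whose endpoints are the two points distinct
from `a_m` and which does not contain `a_m`:
`L₁ = cexp '' [t₂, t₃]`, `L₂ = cexp '' [t₃, t₁+1]`, `L₃ = cexp '' [t₁, t₂]`.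
If `g : S¹ → S¹` is continuous, `g(a_m) = a_m` and `a_m ∉ g(L_m)` for each `m`,
then the degree of `g` equals `1`: every continuous lift `G : ℝ → ℝ` of `g`
along the covering `cexp` satisfies `G(t+1) = G(t) + 1`. -/
theorem degree_eq_one (t₁ t₂ t₃ : ℝ) (h12 : t₁ < t₂) (h23 : t₂ < t₃)
    (h31 : t₃ < t₁ + 1)
    (g : Circle → Circle) (hg : Continuous g)
    (hfix₁ : g (cexp t₁) = cexp t₁)
    (hfix₂ : g (cexp t₂) = cexp t₂)
    (hfix₃ : g (cexp t₃) = cexp t₃)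
    (harc₁ : cexp t₁ ∉ g '' (cexp '' Icc t₂ t₃))
    (harc₂ : cexp t₂ ∉ g '' (cexp '' Icc t₃ (t₁ + 1)))
    (harc₃ : cexp t₃ ∉ g '' (cexp '' Icc t₁ t₂))
    (G : ℝ → ℝ) (hG : Continuous G)
    (hlift : ∀ t : ℝ, g (cexp t) = cexp (G t)) :
    ∀ t : ℝ, G (t + 1) = G t + 1 := by
  have hper : ∀ t, cexp (t + 1) = cexp t := fun t => cexp_eq_iff.2 ⟨1, by simp⟩
  have avoid : ∀ {a : Circle} {s t : ℝ}, a ∉ g '' (cexp '' Icc s t) →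
      ∀ x ∈ Icc s t, cexp (G x) ≠ a := fun ha x hx h =>
    ha ⟨cexp x, mem_image_of_mem _ hx, (hlift x).trans h⟩
  have hdiff : ∀ t, ∃ n : ℤ, G (t + 1) - G t = n := fun t => by
    obtain ⟨n, hn⟩ := cexp_eq_iff.1
      (show cexp (G (t + 1)) = cexp (G t) by rw [← hlift, ← hlift, hper])
    exact ⟨n, by linarith⟩
  obtain ⟨n₁, e₁⟩ := cexp_eq_iff.1 ((hlift t₁).symm.trans hfix₁)
  obtain ⟨n₂, e₂⟩ := cexp_eq_iff.1 ((hlift t₂).symm.trans hfix₂)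
  obtain ⟨n₃, e₃⟩ := cexp_eq_iff.1 ((hlift t₃).symm.trans hfix₃)
  obtain ⟨n₄, e₄⟩ := cexp_eq_iff.1
    (show cexp (G (t₁ + 1)) = cexp (t₁ + 1) by rw [← hlift, hper, hfix₁])
  -- The arc from `a₁` to `a₂` lifts into `(t₃ - 1, t₃)`.
  have hc : cexp (t₃ - 1) = cexp t₃ := by rw [← hper, sub_add_cancel]
  have h₁₂ : n₁ = n₂ := shift_eq_of_avoids hG (c := t₃ - 1) (by linarith) h12.le (by linarith)
    e₁ e₂ (hc ▸ avoid harc₃)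
  have h₂₃ : n₂ = n₃ := shift_eq_of_avoids hG h12 h23.le h31 e₂ e₃ (avoid harc₁)
  have h₃₄ : n₃ = n₄ := shift_eq_of_avoids hG h23 h31.le (by linarith) e₃ e₄ (avoid harc₂)
  have hn : n₁ = n₄ := h₁₂.trans (h₂₃.trans h₃₄)
  subst hn
  intro t
  have := eq_of_continuous_of_integer (h := fun t => G (t + 1) - G t) (by fun_prop) hdiff t t₁
  linarith
end
end
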